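/- arXiv:2009.09751 — 5 statements merged into one kernel-verified Lean document; each statement's English description precedes it below -/
import Mathlib

section
/- Let p ∈ [1/2, 1), let U : (0,∞) → ℝ be strictly increasing, strictly concave, continuously differentiable, with lim_{x→0⁺} U'(x) = ∞ and lim_{x→∞} U'(x) = 0, and let V(y) = sup_{x>0} (U(x) − xy) be its conjugate function. For n ≥ 1 let a_n = (√n/(z_{1,1} − z_{1,0})) · log( (p/(1−p)) · (exp(z_{1,1}/√n) − 1)/(1 − exp(z_{1,0}/√n)) ) and b_n = n · log( (1−p)·exp(−z_{1,0} a_n/√n) + p·exp(−z_{1,1} a_n/√n) ), where z_{1,0} = −√(p/(1−p)) and z_{1,1} = √((1−p)/p). For y > 0 define v(y) = ∫_ℝ V(y · exp(−t/2 − 1/8)) φ(t) dt and v_n(y) = Σ_{k=0}^n V(y · exp(−a_n z_{n,k} − b_n)) f_{n,k}. Then for every y > 0, limsup_{n→∞} v_n(y) ≤ v(y). -/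
open MeasureTheory Filter

/-- The standard normal density. -/
noncomputable def normalPdf (x : ℝ) : ℝ := Real.exp (-x ^ 2 / 2) / Real.sqrt (2 * Real.pi)

/-- Binomial probabilities `f_{n,k} = (n choose k) p^k (1-p)^(n-k)`. -/
noncomputable def binProb (p : ℝ) (n k : ℕ) : ℝ := (n.choose k : ℝ) * p ^ k * (1 - p) ^ (n - k)

/-- Standardized points `z_{n,k} = (k - np)/√(np(1-p))` (also used for `k = n+1`, `k = -1`). -/
noncomputable def zpt (p : ℝ) (n : ℕ) (k : ℤ) : ℝ :=
  ((k : ℝ) - n * p) / Real.sqrt (n * p * (1 - p))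

noncomputable def z10 (p : ℝ) : ℝ := -Real.sqrt (p / (1 - p))

noncomputable def z11 (p : ℝ) : ℝ := Real.sqrt ((1 - p) / p)

/-- The coefficient `a_n` of the martingale density of the `n`-step binomial model. -/
noncomputable def aCoef (p : ℝ) (n : ℕ) : ℝ :=
  (Real.sqrt n / (z11 p - z10 p)) *
    Real.log ((p / (1 - p)) * (Real.exp (z11 p / Real.sqrt n) - 1) /
      (1 - Real.exp (z10 p / Real.sqrt n)))

/-- The coefficient `b_n` of the martingale density of the `n`-step binomial model. -/
noncomputable def bCoef (p : ℝ) (n : ℕ) : ℝ :=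
  n * Real.log ((1 - p) * Real.exp (-(z10 p) * aCoef p n / Real.sqrt n) +
    p * Real.exp (-(z11 p) * aCoef p n / Real.sqrt n))

/-!
Write `exp (-a_n z_{n,k} - b_n) = exp (-w_{n,k} / 2 - 1 / 8)` and
`G t = V (y * exp (-t / 2 - 1 / 8))`, so that `v_n y` and `v y` are the integrals of one continuous
increasing function `G` against the law of `w_{n,k}` and against the standard normal law. The first
laws converge weakly to the second since `a_n → 1/2` and `b_n → 1/8`. By Fatou's lemma the part of
`G` below any level causes no loss, so only the mass of `G` near `+∞` has to be controlled. There
`w_{n,k} ≤ z_{n,k} + O(1/√n)`, because `a_n ≤ 1/2`, and the binomial weights are dominated by a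
constant multiple of the normal density, because
`f_{n,k+1} / f_{n,k} ≤ exp (-(k - np) / (np(1-p)))` for `k ≥ np`; both bounds need `p ≥ 1/2`.

Should `G` fail to be integrable against the normal law, Fatou's lemma for the nonnegative function
`V x - (U 1 - x)` of the density `x = y * exp (-w / 2 - 1 / 8)`, which has mean `y` for every `n`,
gives `v_n y → ∞`.
-/

open scoped Topology ENNReal

section Conjugate

/-- The conjugate `V(y) = sup_{x > 0} (U(x) - x y)` of a utility function `U` on `(0, ∞)`, with
the junk value `0` of `sSup` where the supremum is infinite. -/
noncomputable def conjugate (U : ℝ → ℝ) (y : ℝ) : ℝ :=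
  sSup {r : ℝ | ∃ x > (0 : ℝ), r = U x - x * y}

variable {U : ℝ → ℝ} {y : ℝ}

lemma bddAbove_conjugate_of_deriv_le (hU_mono : MonotoneOn U (Set.Ioi 0))
    (hU_diff : DifferentiableOn ℝ U (Set.Ioi 0)) (hy : 0 ≤ y)
    (hU_deriv : ∀ᶠ x in atTop, deriv U x ≤ y) :
    BddAbove {r : ℝ | ∃ x > (0 : ℝ), r = U x - x * y} := by
  obtain ⟨x₀, hx₀, hderiv⟩ : ∃ x₀ > (0 : ℝ), ∀ x ≥ x₀, deriv U x ≤ y := by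
    obtain ⟨x₁, hx₁⟩ := eventually_atTop.1 hU_deriv
    exact ⟨max x₁ 1, by positivity, fun x hx ↦ hx₁ x ((le_max_left _ _).trans hx)⟩
  have hdiff (x : ℝ) (hx : x₀ ≤ x) : DifferentiableAt ℝ U x :=
    hU_diff.differentiableAt (Ioi_mem_nhds (hx₀.trans_le hx))
  have hdiff' (x : ℝ) (hx : x₀ ≤ x) :
      HasDerivAt (fun x ↦ U x - x * y) (deriv U x - 1 * y) x :=
    (hdiff x hx).hasDerivAt.sub ((hasDerivAt_id x).mul_const y)
  have hanti : AntitoneOn (fun x ↦ U x - x * y) (Set.Ici x₀) := by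
    refine antitoneOn_of_deriv_nonpos (convex_Ici _)
      (fun x hx ↦ (hdiff' x hx).continuousAt.continuousWithinAt)
      (fun x hx ↦ (hdiff' x (interior_subset hx)).differentiableAt.differentiableWithinAt)
      fun x hx ↦ ?_
    rw [(hdiff' x (interior_subset hx)).deriv]
    linarith [hderiv x (interior_subset hx)]
  refine ⟨U x₀, ?_⟩
  rintro _ ⟨x, hx, rfl⟩
  rcases le_total x x₀ with h | h
  · linarith [hU_mono hx hx₀ h, mul_nonneg (le_of_lt hx) hy]
  · have := hanti Set.self_mem_Ici h h
    dsimp only at this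
    linarith [mul_nonneg hx₀.le hy]

lemma sub_mul_le_conjugate (hb : BddAbove {r : ℝ | ∃ x > (0 : ℝ), r = U x - x * y}) {x : ℝ}
    (hx : 0 < x) : U x - x * y ≤ conjugate U y :=
  le_csSup hb ⟨x, hx, rfl⟩

lemma conjugate_le {c : ℝ} (h : ∀ x > 0, U x - x * y ≤ c) : conjugate U y ≤ c := by
  refine csSup_le ⟨_, 1, one_pos, rfl⟩ ?_
  rintro _ ⟨x, hx, rfl⟩
  exact h x hx

lemma antitoneOn_conjugate
    (hb : ∀ y > 0, BddAbove {r : ℝ | ∃ x > (0 : ℝ), r = U x - x * y}) :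
    AntitoneOn (conjugate U) (Set.Ioi 0) := fun y hy y' _ hyy' ↦
  conjugate_le fun x hx ↦ le_trans (by gcongr) (sub_mul_le_conjugate (hb y hy) hx)

lemma convexOn_conjugate
    (hb : ∀ y > 0, BddAbove {r : ℝ | ∃ x > (0 : ℝ), r = U x - x * y}) :
    ConvexOn ℝ (Set.Ioi 0) (conjugate U) := by
  refine ⟨convex_Ioi 0, fun y hy z hz a b ha hb' hab ↦ conjugate_le fun x hx ↦ ?_⟩
  calc U x - x * (a • y + b • z)
      = a • (U x - x * y) + b • (U x - x * z) := by
        simp only [smul_eq_mul]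
        linear_combination -U x * hab
    _ ≤ a • conjugate U y + b • conjugate U z := by
        gcongr
        exacts [sub_mul_le_conjugate (hb y hy) hx, sub_mul_le_conjugate (hb z hz) hx]

end Conjugate

section WeakConvergence

variable {Ω : Type*} [MeasurableSpace Ω]

lemma tendsto_integral_max_sub_natCast_zero {μ : Measure Ω} {G : Ω → ℝ}
    (hG : Integrable G μ) :
    Tendsto (fun j : ℕ ↦ ∫ x, max (G x - j) 0 ∂μ) atTop (𝓝 0) := by
  suffices Tendsto (fun j : ℕ ↦ ∫ x, max (G x - j) 0 ∂μ) atTop (𝓝 (∫ _, 0 ∂μ)) by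
    simpa using this
  refine tendsto_integral_of_dominated_convergence (fun x ↦ |G x|) (fun j ↦ ?_) hG.abs
    (fun j ↦ ae_of_all _ fun x ↦ ?_) (ae_of_all _ fun x ↦ ?_)
  · exact (hG.1.sub aestronglyMeasurable_const).sup aestronglyMeasurable_const
  · rw [Real.norm_eq_abs, abs_of_nonneg (le_max_right _ _)]
    exact max_le (by linarith [le_abs_self (G x), Nat.cast_nonneg (α := ℝ) j]) (abs_nonneg _)
  · refine tendsto_const_nhds.congr' ?_
    filter_upwards [tendsto_natCast_atTop_atTop.eventually_ge_atTop (G x)] with j hj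
    rw [max_eq_right (by linarith)]

variable [TopologicalSpace Ω] [OpensMeasurableSpace Ω] [HasOuterApproxClosed Ω]
  {μ : ProbabilityMeasure Ω} {μs : ℕ → ProbabilityMeasure Ω} {f G : Ω → ℝ}

lemma eventually_lt_integral_of_ofReal_lt_lintegral (hμ : Tendsto μs atTop (𝓝 μ))
    (hf : Continuous f) (hf_nonneg : 0 ≤ f) (hf_int : ∀ n, Integrable f (μs n)) {a : ℝ}
    (ha : ENNReal.ofReal a < ∫⁻ x, ENNReal.ofReal (f x) ∂μ) :
    ∀ᶠ n in atTop, a < ∫ x, f x ∂μs n := by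
  have fatou : ∫⁻ x, ENNReal.ofReal (f x) ∂μ ≤
      liminf (fun n ↦ ∫⁻ x, ENNReal.ofReal (f x) ∂μs n) atTop :=
    lintegral_le_liminf_lintegral_of_forall_isOpen_measure_le_liminf_measure hf hf_nonneg
      fun _ hA ↦ ProbabilityMeasure.le_liminf_measure_open_of_tendsto hμ hA
  filter_upwards [eventually_lt_of_lt_liminf (ha.trans_le fatou)] with n hn
  rw [← ofReal_integral_eq_lintegral_ofReal (hf_int n) (ae_of_all _ hf_nonneg)] at hn
  exact (ENNReal.ofReal_lt_ofReal_iff'.1 hn).1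

lemma tendsto_integral_atTop_of_not_integrable (hμ : Tendsto μs atTop (𝓝 μ))
    (hf : Continuous f) (hf_nonneg : 0 ≤ f) (hf_int : ∀ n, Integrable f (μs n))
    (hf_not : ¬ Integrable f μ) : Tendsto (fun n ↦ ∫ x, f x ∂μs n) atTop atTop := by
  have htop : ∫⁻ x, ENNReal.ofReal (f x) ∂μ = ∞ := by
    contrapose! hf_not
    exact (lintegral_ofReal_ne_top_iff_integrable hf.aestronglyMeasurable
      (ae_of_all _ hf_nonneg)).1 hf_not
  refine tendsto_atTop.2 fun a ↦ ?_
  filter_upwards [eventually_lt_integral_of_ofReal_lt_lintegral hμ hf hf_nonneg hf_int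
    (htop ▸ ENNReal.ofReal_lt_top)] with n hn using hn.le

lemma eventually_integral_sub_lt_integral (hμ : Tendsto μs atTop (𝓝 μ)) (hf : Continuous f)
    (hf_nonneg : 0 ≤ f) (hf_int : ∀ n, Integrable f (μs n)) (hf_int' : Integrable f μ) {ε : ℝ}
    (hε : 0 < ε) : ∀ᶠ n in atTop, (∫ x, f x ∂μ) - ε < ∫ x, f x ∂μs n := by
  rcases lt_or_ge ((∫ x, f x ∂μ) - ε) 0 with h | h
  · exact Eventually.of_forall fun n ↦ h.trans_le (integral_nonneg hf_nonneg)
  · refine eventually_lt_integral_of_ofReal_lt_lintegral hμ hf hf_nonneg hf_int ?_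
    rw [← ofReal_integral_eq_lintegral_ofReal hf_int' (ae_of_all _ hf_nonneg)]
    exact (ENNReal.ofReal_lt_ofReal_iff (by linarith)).2 (by linarith)

lemma eventually_integral_le_integral_add (hμ : Tendsto μs atTop (𝓝 μ)) (hG : Continuous G)
    (hG_int : ∀ n, Integrable G (μs n)) (hG_int' : Integrable G μ) {C : ℝ}
    (htail : ∀ᶠ j : ℕ in atTop, ∀ᶠ n in atTop,
      ∫ x, max (G x - j) 0 ∂μs n ≤ C * ∫ x, max (G x - j) 0 ∂μ) {ε : ℝ} (hε : 0 < ε) :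
    ∀ᶠ n in atTop, ∫ x, G x ∂μs n ≤ (∫ x, G x ∂μ) + ε := by
  obtain ⟨j, hj_small, hj_tail⟩ : ∃ j : ℕ, C * ∫ x, max (G x - j) 0 ∂μ < ε / 2 ∧
      ∀ᶠ n in atTop, ∫ x, max (G x - j) 0 ∂μs n ≤ C * ∫ x, max (G x - j) 0 ∂μ := by
    have hlim := (tendsto_integral_max_sub_natCast_zero hG_int').const_mul C
    rw [mul_zero] at hlim
    exact ((hlim.eventually (gt_mem_nhds (half_pos hε))).and htail).exists
  have split {ν : Measure Ω} [IsProbabilityMeasure ν] (h : Integrable G ν) :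
      ∫ x, G x ∂ν = j + ∫ x, max (G x - j) 0 ∂ν - ∫ x, max (j - G x) 0 ∂ν := by
    have hsub : Integrable (fun x ↦ G x - j) ν := h.sub (integrable_const _)
    have hsub' : Integrable (fun x ↦ j - G x) ν := (integrable_const _).sub h
    rw [add_sub_assoc, ← integral_sub hsub.pos_part hsub'.pos_part]
    simp_rw [← neg_sub (G _) (j : ℝ), max_zero_sub_eq_self]
    rw [integral_sub h (integrable_const _), integral_const]
    simp
  have hlower := eventually_integral_sub_lt_integral hμ
    (f := fun x ↦ max (j - G x) 0) (by fun_prop) (fun x ↦ le_max_right _ _)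
    (fun n ↦ ((integrable_const _).sub (hG_int n)).pos_part)
    ((integrable_const _).sub hG_int').pos_part (half_pos hε)
  filter_upwards [hj_tail, hlower] with n h₁ h₂
  have hpos : 0 ≤ ∫ x, max (G x - j) 0 ∂μ := integral_nonneg fun x ↦ le_max_right _ _
  rw [split (hG_int n), split hG_int']
  linarith

end WeakConvergence

section ElementaryInequalities

variable {x w : ℝ}

lemma exp_sub_sq_half_le_one_add (hx : 0 ≤ x) : Real.exp (x - x ^ 2 / 2) ≤ 1 + x := by
  rw [← Real.le_log_iff_exp_le (by positivity)]
  refine le_trans ?_ (Real.le_log_one_add_of_nonneg hx)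
  rw [le_div_iff₀ (by positivity)]
  nlinarith [pow_nonneg hx 3]

lemma one_sub_le_exp_neg_sub_sq_half (hx : 0 ≤ x) : 1 - x ≤ Real.exp (-x - x ^ 2 / 2) := by
  rcases le_or_gt 1 x with hx1 | hx1
  · exact (sub_nonpos.2 hx1).trans (Real.exp_pos _).le
  have h1x : 0 < 1 - x := sub_pos.2 hx1
  have h2x : 0 < 2 - x := by linarith
  have hlog : 2 * (x / (1 - x)) / (x / (1 - x) + 2) ≤ -Real.log (1 - x) := by
    rw [← Real.log_inv]
    convert Real.le_log_one_add_of_nonneg (div_nonneg hx h1x.le) using 2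
    field_simp
    ring
  rw [← Real.log_le_iff_le_exp h1x]
  suffices x + x ^ 2 / 2 ≤ 2 * (x / (1 - x)) / (x / (1 - x) + 2) by linarith
  rw [show 2 * (x / (1 - x)) / (x / (1 - x) + 2) = 2 * x / (2 - x) by
    field_simp
    ring, le_div_iff₀ h2x]
  nlinarith [pow_nonneg hx 3]

lemma one_sub_le_one_add_mul_exp_neg_add (hw : 0 ≤ w) (hwx : w ≤ x) :
    1 - x ≤ (1 + w) * Real.exp (-(x + w)) :=
  calc 1 - x ≤ Real.exp (-x - x ^ 2 / 2) := one_sub_le_exp_neg_sub_sq_half (hw.trans hwx)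
    _ ≤ Real.exp (w - w ^ 2 / 2 + -(x + w)) := Real.exp_le_exp.2 (by nlinarith)
    _ = Real.exp (w - w ^ 2 / 2) * Real.exp (-(x + w)) := Real.exp_add _ _
    _ ≤ (1 + w) * Real.exp (-(x + w)) := by gcongr; exact exp_sub_sq_half_le_one_add hw

lemma div_pow_le_exp_sub (hx : 0 ≤ x) {k : ℕ} (hk : k ≠ 0) :
    (x / k) ^ k ≤ Real.exp (x - k) := by
  have : (0 : ℝ) < k := by positivity
  calc (x / k) ^ k ≤ Real.exp (x / k - 1) ^ k := by
        gcongr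
        linarith [Real.add_one_le_exp (x / k - 1)]
    _ = Real.exp (x - k) := by
        rw [← Real.exp_nat_mul]
        congr 1
        field_simp

lemma factorial_le_exp_one_mul_sqrt_mul_pow {n : ℕ} (hn : n ≠ 0) :
    (n.factorial : ℝ) ≤ Real.exp 1 * √n * (n / Real.exp 1) ^ n := by
  obtain ⟨m, rfl⟩ := Nat.exists_eq_succ_of_ne_zero hn
  have h : Stirling.stirlingSeq m.succ ≤ Real.exp 1 / √2 := by
    rw [← Stirling.stirlingSeq_one]
    exact Stirling.stirlingSeq'_antitone (Nat.zero_le m)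
  rw [Stirling.stirlingSeq, div_le_iff₀ (by positivity), Real.sqrt_mul (by norm_num)] at h
  refine h.trans_eq ?_
  field_simp

end ElementaryInequalities

section Binomial

variable {p : ℝ} {n k : ℕ}

lemma binProb_nonneg (hp : p ∈ Set.Icc 0 1) (n k : ℕ) : 0 ≤ binProb p n k := by
  have := hp.1
  have : 0 ≤ 1 - p := sub_nonneg.2 hp.2
  unfold binProb
  positivity

lemma choose_le_stirling (hk : k ≠ 0) {l : ℕ} (hl : l ≠ 0) :
    ((k + l).choose k : ℝ) ≤
      √((k + l) / (k * l)) * ((k + l) ^ (k + l) / (k ^ k * l ^ l)) := by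
  have hk' : (0 : ℝ) < k := by positivity
  have : (0 : ℝ) < l := by positivity
  have upper := factorial_le_exp_one_mul_sqrt_mul_pow (n := k + l) (by omega)
  have lower (i : ℕ) : √(2 * Real.pi) * √i * (i / Real.exp 1) ^ i ≤ i.factorial := by
    rw [← Real.sqrt_mul (by positivity)]
    exact Stirling.le_factorial_stirling i
  have const_le : Real.exp 1 / (2 * Real.pi) ≤ 1 := by
    rw [div_le_one (by positivity)]
    linarith [Real.exp_one_lt_d9, Real.pi_gt_three]
  calc ((k + l).choose k : ℝ)
      ≤ (Real.exp 1 * √(k + l : ℕ) * ((k + l : ℕ) / Real.exp 1) ^ (k + l)) /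
          ((√(2 * Real.pi) * √k * (k / Real.exp 1) ^ k) *
            (√(2 * Real.pi) * √l * (l / Real.exp 1) ^ l)) := by
        rw [Nat.cast_add_choose]
        gcongr
        exacts [lower k, lower l]
    _ = Real.exp 1 / (2 * Real.pi) *
          (√((k + l) / (k * l)) * ((k + l) ^ (k + l) / (k ^ k * l ^ l))) := by
        rw [Real.sqrt_div (by positivity), Real.sqrt_mul hk'.le]
        nth_rw 3 [← Real.sq_sqrt (show 0 ≤ 2 * Real.pi by positivity)]
        push_cast
        simp only [div_pow]
        rw [pow_add (Real.exp 1)]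
        field_simp
    _ ≤ _ := mul_le_of_le_one_left (by positivity) const_le

lemma binProb_le_sqrt_div (hp : p ∈ Set.Icc 0 1) (hk : k ≠ 0) (hkn : k < n) :
    binProb p n k ≤ √(n / (k * (n - k))) := by
  obtain ⟨l, rfl⟩ := Nat.exists_eq_add_of_le hkn.le
  have hl : l ≠ 0 := by omega
  have hp0 := hp.1
  have hq : 0 ≤ 1 - p := sub_nonneg.2 hp.2
  have gibbs : ((k + l) * p / k) ^ k * ((k + l) * (1 - p) / l) ^ l ≤ 1 := by
    calc _ ≤ Real.exp ((k + l) * p - k) * Real.exp ((k + l) * (1 - p) - l) := by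
          gcongr
          exacts [div_pow_le_exp_sub (by positivity) hk, div_pow_le_exp_sub (by positivity) hl]
      _ = 1 := by
          rw [← Real.exp_add, Real.exp_eq_one_iff]
          ring
  calc binProb p (k + l) k
      = ((k + l).choose k : ℝ) * p ^ k * (1 - p) ^ l := by
        rw [binProb, Nat.add_sub_cancel_left]
    _ ≤ √((k + l) / (k * l)) * ((k + l) ^ (k + l) / (k ^ k * l ^ l)) * p ^ k * (1 - p) ^ l := by
        gcongr
        exact choose_le_stirling hk hl
    _ = √((k + l) / (k * l)) * (((k + l) * p / k) ^ k * ((k + l) * (1 - p) / l) ^ l) := by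
        simp only [div_pow, mul_pow, pow_add]
        ring
    _ ≤ √((k + l) / (k * l)) := mul_le_of_le_one_right (by positivity) gibbs
    _ = _ := by
        push_cast
        rw [add_sub_cancel_left]

lemma binProb_succ (hkn : k < n) :
    binProb p n (k + 1) * ((k + 1) * (1 - p)) = binProb p n k * ((n - k) * p) := by
  have hchoose : (n.choose (k + 1) : ℝ) * (k + 1) = n.choose k * (n - k) := by
    rw [← Nat.cast_sub hkn.le]
    exact_mod_cast Nat.choose_succ_right_eq n k
  have hpow : (1 - p) ^ (n - k) = (1 - p) ^ (n - (k + 1)) * (1 - p) := by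
    rw [← pow_succ]
    congr 1
    omega
  rw [binProb, binProb, hpow, pow_succ]
  linear_combination p ^ k * p * (1 - p) ^ (n - (k + 1)) * (1 - p) * hchoose

end Binomial

section BinomialTail

variable {p : ℝ} {n k : ℕ}

lemma binProb_ceil_le (hp : p ∈ Set.Icc 0 1) (hσ : 2 ≤ n * p * (1 - p)) :
    binProb p n ⌈n * p⌉₊ ≤ √2 / √(n * p * (1 - p)) := by
  have hq : 0 ≤ 1 - p := sub_nonneg.2 hp.2
  have hn : (0 : ℝ) ≤ n := n.cast_nonneg
  have hnp : 2 ≤ n * p :=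
    hσ.trans (mul_le_of_le_one_right (mul_nonneg hn hp.1) (by linarith [hp.1]))
  have hnq : 2 ≤ n * (1 - p) := by
    refine hσ.trans ?_
    rw [mul_right_comm]
    exact mul_le_of_le_one_right (mul_nonneg hn hq) hp.2
  have hceil : n * p ≤ ⌈n * p⌉₊ := Nat.le_ceil _
  have hceil' : (⌈n * p⌉₊ : ℝ) < n * p + 1 := Nat.ceil_lt_add_one (by linarith)
  have hlt : ⌈n * p⌉₊ < n := by
    rw [← Nat.cast_lt (α := ℝ)]
    linarith
  refine (binProb_le_sqrt_div hp (by rw [← Nat.cast_ne_zero (R := ℝ)]; linarith) hlt).trans ?_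
  rw [← Real.sqrt_div zero_le_two]
  refine Real.sqrt_le_sqrt ?_
  calc (n : ℝ) / (⌈n * p⌉₊ * (n - ⌈n * p⌉₊)) ≤ n / (n * p * (n * (1 - p) / 2)) := by
        gcongr
        linarith
    _ = 2 / (n * p * (1 - p)) := by
        field_simp

lemma binProb_succ_le (hp : p ∈ Set.Ico (1 / 2) 1) (hk : n * p ≤ k) (hkn : k < n) :
    binProb p n (k + 1) ≤
      binProb p n k * Real.exp (-((k - n * p) / (n * p * (1 - p)))) := by
  have hp0 : 0 < p := by linarith [hp.1]
  have hq : 0 < 1 - p := sub_pos.2 hp.2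
  have hn : (0 : ℝ) < n := Nat.cast_pos.2 (by omega)
  set x := (k - n * p) / (n * (1 - p)) with hx
  set w := (k - n * p) / (n * p) with hw
  have hw0 : 0 ≤ w := div_nonneg (sub_nonneg.2 hk) (by positivity)
  have hwx : w ≤ x := div_le_div_of_nonneg_left (sub_nonneg.2 hk) (by positivity)
    (by gcongr; linarith [hp.1])
  have hxw : (k - n * p) / (n * p * (1 - p)) = x + w := by
    rw [hx, hw]
    field_simp
    ring
  have hratio : (n - k) * p ≤ Real.exp (-(x + w)) * ((k + 1) * (1 - p)) :=
    calc (n - k) * p = n * p * (1 - p) * (1 - x) := by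
          rw [hx]
          field_simp
          ring
      _ ≤ n * p * (1 - p) * ((1 + w) * Real.exp (-(x + w))) := by
          gcongr
          exact one_sub_le_one_add_mul_exp_neg_add hw0 hwx
      _ = Real.exp (-(x + w)) * (k * (1 - p)) := by
          rw [hw]
          field_simp
          ring
      _ ≤ Real.exp (-(x + w)) * ((k + 1) * (1 - p)) := by
          gcongr
          linarith
  rw [hxw, ← mul_le_mul_iff_left₀ (show 0 < (k + 1) * (1 - p) by positivity), binProb_succ hkn,
    mul_assoc]
  exact mul_le_mul_of_nonneg_left hratio (binProb_nonneg ⟨hp0.le, hp.2.le⟩ n k)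

lemma binProb_le_binProb_ceil_mul_exp (hp : p ∈ Set.Ico (1 / 2) 1) (hk : ⌈n * p⌉₊ ≤ k)
    (hkn : k ≤ n) :
    binProb p n k ≤ binProb p n ⌈n * p⌉₊ *
      Real.exp (-((k - n * p) * (k - n * p - 1) / (2 * (n * p * (1 - p))))) := by
  have hp0 : 0 < p := by linarith [hp.1]
  have hq : 0 < 1 - p := sub_pos.2 hp.2
  have hnonneg := binProb_nonneg ⟨hp0.le, hp.2.le⟩ n ⌈n * p⌉₊
  induction k, hk using Nat.le_induction with
  | base =>
    refine le_mul_of_one_le_right hnonneg (Real.one_le_exp (neg_nonneg.2 ?_))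
    refine div_nonpos_of_nonpos_of_nonneg (mul_nonpos_of_nonneg_of_nonpos ?_ ?_) (by positivity)
    · linarith [Nat.le_ceil (n * p)]
    · linarith [Nat.ceil_lt_add_one (show 0 ≤ n * p by positivity)]
  | succ k hk ih =>
    refine (binProb_succ_le hp (Nat.ceil_le.1 hk) hkn).trans ?_
    refine (mul_le_mul_of_nonneg_right (ih (by omega)) (Real.exp_pos _).le).trans_eq ?_
    rw [mul_assoc, ← Real.exp_add]
    have hn : (0 : ℝ) < n := Nat.cast_pos.2 (by omega)
    congr 2
    push_cast
    field_simp
    ring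

lemma exists_binProb_le_normalPdf (hp : p ∈ Set.Ico (1 / 2) 1) {m : ℝ} (hm : 0 ≤ m) :
    ∃ C ≥ 0, ∀ n k : ℕ, 2 ≤ n * p * (1 - p) → ⌈n * p⌉₊ ≤ k → k ≤ n →
      binProb p n k ≤ C * (normalPdf ((k + 1 + m - n * p) / √(n * p * (1 - p))) /
        √(n * p * (1 - p))) := by
  refine ⟨√2 * √(2 * Real.pi) * Real.exp (2 * m + 3 + (m + 1) ^ 2 / 4), by positivity,
    fun n k hσ hk hkn ↦ ?_⟩
  have hp0 : 0 < p := by linarith [hp.1]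
  have hq : 0 < 1 - p := sub_pos.2 hp.2
  set j := k - n * p with hj
  set s := √(n * p * (1 - p))
  have hs2 : s ^ 2 = n * p * (1 - p) := Real.sq_sqrt (by linarith)
  have hs0 : 0 < s := Real.sqrt_pos.2 (by linarith)
  have hjs : j ≤ 2 * s ^ 2 := by
    have hkn' : (k : ℝ) ≤ n := Nat.cast_le.2 hkn
    have : 0 ≤ n * (1 - p) * (2 * p - 1) :=
      mul_nonneg (by positivity) (by linarith [hp.1])
    rw [hs2, hj]
    linarith
  have exponent_le : -(j * (j - 1) / (2 * s ^ 2)) ≤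
      2 * m + 3 + (m + 1) ^ 2 / 4 + -((k + 1 + m - n * p) / s) ^ 2 / 2 := by
    rw [← sub_nonneg]
    have : 2 * m + 3 + (m + 1) ^ 2 / 4 + -((k + 1 + m - n * p) / s) ^ 2 / 2 -
        -(j * (j - 1) / (2 * s ^ 2)) =
        (2 * (2 * m + 3) * (2 * s ^ 2 - j) + (m + 1) ^ 2 * (s ^ 2 - 2)) / (4 * s ^ 2) := by
      rw [hj]
      field_simp
      ring
    rw [this]
    refine div_nonneg (add_nonneg (mul_nonneg ?_ ?_) (mul_nonneg ?_ ?_)) ?_ <;> nlinarith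
  calc binProb p n k
      ≤ binProb p n ⌈n * p⌉₊ * Real.exp (-(j * (j - 1) / (2 * s ^ 2))) := by
        rw [hs2]
        exact binProb_le_binProb_ceil_mul_exp hp hk hkn
    _ ≤ √2 / s * Real.exp
          (2 * m + 3 + (m + 1) ^ 2 / 4 + -((k + 1 + m - n * p) / s) ^ 2 / 2) := by
        gcongr
        exact binProb_ceil_le ⟨hp0.le, hp.2.le⟩ hσ
    _ = _ := by
        rw [Real.exp_add, normalPdf]
        field_simp

end BinomialTail

section NormalDensity

open ProbabilityTheory

lemma normalPdf_eq_gaussianPDFReal : normalPdf = gaussianPDFReal 0 1 := by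
  ext x
  simp only [normalPdf, gaussianPDFReal, NNReal.coe_one, mul_one, sub_zero]
  ring

lemma normalPdf_pos (x : ℝ) : 0 < normalPdf x := by
  unfold normalPdf
  positivity

lemma antitoneOn_normalPdf : AntitoneOn normalPdf (Set.Ici 0) := fun x hx y _ hxy ↦ by
  have : 0 ≤ x := hx
  unfold normalPdf
  gcongr

lemma integral_gaussianReal_eq_integral_mul_normalPdf (f : ℝ → ℝ) :
    ∫ x, f x ∂gaussianReal 0 1 = ∫ x, f x * normalPdf x := by
  simp_rw [integral_gaussianReal_eq_integral_smul one_ne_zero, normalPdf_eq_gaussianPDFReal,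
    smul_eq_mul, mul_comm]

lemma integrable_gaussianReal_iff {f : ℝ → ℝ} :
    Integrable f (gaussianReal 0 1) ↔ Integrable (fun x ↦ f x * normalPdf x) := by
  rw [gaussianReal_of_var_ne_zero _ one_ne_zero, integrable_withDensity_iff
    (measurable_gaussianPDF 0 1) (ae_of_all _ fun _ ↦ ENNReal.ofReal_lt_top)]
  simp_rw [toReal_gaussianPDF, normalPdf_eq_gaussianPDFReal]

end NormalDensity

section BinomialTailSum

lemma sub_mul_le_intervalIntegral_mul {a b : ℝ} {g φ : ℝ → ℝ} (hab : a ≤ b)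
    (hg : MonotoneOn g (Set.Icc a b)) (hφ : AntitoneOn φ (Set.Icc a b)) (hga : 0 ≤ g a)
    (hφb : 0 ≤ φ b) (hint : IntervalIntegrable (fun t ↦ g t * φ t) volume a b) :
    (b - a) * (g a * φ b) ≤ ∫ t in a..b, g t * φ t := by
  rw [← smul_eq_mul, ← intervalIntegral.integral_const]
  refine intervalIntegral.integral_mono_on hab (by simp) hint fun t ht ↦ ?_
  have hgt : g a ≤ g t := hg (Set.left_mem_Icc.2 hab) ht ht.1
  exact mul_le_mul hgt (hφ ht (Set.right_mem_Icc.2 hab) ht.2) hφb (hga.trans hgt)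

variable {p : ℝ}

lemma exists_binProb_mul_le_intervalIntegral (hp : p ∈ Set.Ico (1 / 2) 1) {m : ℝ} (hm : 0 ≤ m) :
    ∃ C ≥ 0, ∀ n k : ℕ, 2 ≤ n * p * (1 - p) → ⌈n * p⌉₊ ≤ k → k ≤ n →
      ∀ g : ℝ → ℝ, Monotone g → 0 ≤ g → Integrable (fun t ↦ g t * normalPdf t) →
      binProb p n k * g ((k + m - n * p) / √(n * p * (1 - p))) ≤
        C * ∫ t in (k + m - n * p) / √(n * p * (1 - p))..
          (↑(k + 1) + m - n * p) / √(n * p * (1 - p)), g t * normalPdf t := by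
  obtain ⟨C, hC, hloc⟩ := exists_binProb_le_normalPdf hp hm
  refine ⟨C, hC, fun n k hσ hk hkn g hg hg0 hint ↦ ?_⟩
  have hpdf := hloc n k hσ hk hkn
  set s := √(n * p * (1 - p))
  have hs0 : 0 < s := Real.sqrt_pos.2 (by linarith)
  set a := (k + m - n * p) / s with ha
  set b := (↑(k + 1) + m - n * p) / s with hb
  have hpdf' : binProb p n k ≤ C * (normalPdf b / s) := by
    rwa [hb, Nat.cast_succ]
  have ha0 : 0 ≤ a := div_nonneg (by linarith [Nat.ceil_le.1 hk]) hs0.le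
  have hba : b - a = 1 / s := by
    rw [ha, hb, Nat.cast_succ]
    ring
  have hab : a ≤ b := sub_nonneg.1 (hba ▸ by positivity)
  calc binProb p n k * g a
      ≤ C * (normalPdf b / s) * g a := mul_le_mul_of_nonneg_right hpdf' (hg0 _)
    _ = C * ((b - a) * (g a * normalPdf b)) := by
        rw [hba]
        ring
    _ ≤ C * ∫ t in a..b, g t * normalPdf t := by
        gcongr
        exact sub_mul_le_intervalIntegral_mul hab (hg.monotoneOn _)
          (antitoneOn_normalPdf.mono fun t ht ↦ ha0.trans ht.1) (hg0 _) (normalPdf_pos _).le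
          hint.intervalIntegrable

lemma exists_sum_binProb_tail_le (hp : p ∈ Set.Ico (1 / 2) 1) {m : ℝ} (hm : 0 ≤ m) :
    ∃ C, ∀ n : ℕ, 2 ≤ n * p * (1 - p) → ∀ g : ℝ → ℝ, Monotone g → 0 ≤ g →
      Integrable (fun t ↦ g t * normalPdf t) →
      ∑ k ∈ Finset.Ico ⌈n * p⌉₊ (n + 1),
        binProb p n k * g ((k + m - n * p) / √(n * p * (1 - p))) ≤
      C * ∫ t, g t * normalPdf t := by
  obtain ⟨C, hC, hcell⟩ := exists_binProb_mul_le_intervalIntegral hp hm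
  refine ⟨C, fun n hσ g hg hg0 hint ↦ ?_⟩
  let x (k : ℕ) : ℝ := (k + m - n * p) / √(n * p * (1 - p))
  have hceil : ⌈n * p⌉₊ ≤ n + 1 :=
    Nat.ceil_le.2 (by push_cast; nlinarith [hp.2, n.cast_nonneg (α := ℝ)])
  have hx : x ⌈n * p⌉₊ ≤ x (n + 1) := by
    dsimp only [x]
    gcongr
  calc ∑ k ∈ Finset.Ico ⌈n * p⌉₊ (n + 1), binProb p n k * g (x k)
      ≤ ∑ k ∈ Finset.Ico ⌈n * p⌉₊ (n + 1), C * ∫ t in x k..x (k + 1), g t * normalPdf t :=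
        Finset.sum_le_sum fun k hk ↦ hcell n k hσ (Finset.mem_Ico.1 hk).1
          (Nat.lt_succ_iff.1 (Finset.mem_Ico.1 hk).2) g hg hg0 hint
    _ = C * ∫ t in x ⌈n * p⌉₊..x (n + 1), g t * normalPdf t := by
        rw [← Finset.mul_sum, intervalIntegral.sum_integral_adjacent_intervals_Ico hceil
          fun k _ ↦ hint.intervalIntegrable]
    _ ≤ C * ∫ t, g t * normalPdf t := by
        rw [intervalIntegral.integral_of_le hx]
        exact mul_le_mul_of_nonneg_left (setIntegral_le_integral hint
          (ae_of_all _ fun t ↦ mul_nonneg (hg0 t) (normalPdf_pos t).le)) hC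

end BinomialTailSum

lemma convexOn_sinh : ConvexOn ℝ (Set.Ici 0) Real.sinh := by
  refine convexOn_of_deriv2_nonneg' (convex_Ici 0) Real.differentiable_sinh.differentiableOn
    (by simpa using Real.differentiable_cosh.differentiableOn) fun x hx ↦ ?_
  simpa using hx

lemma sinh_mul_le {c x : ℝ} (hc : c ∈ Set.Icc 0 1) (hx : 0 ≤ x) :
    Real.sinh (c * x) ≤ c * Real.sinh x := by
  simpa using convexOn_sinh.2 (Set.mem_Ici.2 hx) Set.self_mem_Ici hc.1 (sub_nonneg.2 hc.2)
    (add_sub_cancel c 1)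

lemma sinh_le_mul_exp_sq_half {x : ℝ} (hx : 0 ≤ x) :
    Real.sinh x ≤ x * Real.exp (x ^ 2 / 2) := by
  have hmvt : Real.sinh x - Real.sinh 0 ≤ Real.cosh x * (x - 0) := by
    refine (convex_Icc 0 x).image_sub_le_mul_sub_of_deriv_le (by fun_prop) (by fun_prop)
      (fun t ht ↦ ?_) 0 (Set.left_mem_Icc.2 hx) x (Set.right_mem_Icc.2 hx) hx
    rw [interior_Icc] at ht
    rw [Real.deriv_sinh, Real.cosh_le_cosh, abs_of_pos ht.1, abs_of_nonneg hx]
    exact ht.2.le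
  rw [Real.sinh_zero, sub_zero, sub_zero, mul_comm] at hmvt
  exact hmvt.trans (mul_le_mul_of_nonneg_left (Real.cosh_le_exp_half_sq x) hx)

lemma norm_exp_sub_taylor_two_le {x : ℂ} (hx : ‖x‖ ≤ 1) :
    ‖Complex.exp x - (1 + x + x ^ 2 / 2)‖ ≤ ‖x‖ ^ 3 := by
  have h := Complex.exp_bound hx (n := 3) (by norm_num)
  norm_num [Finset.sum_range_succ, Nat.factorial] at h
  exact h.trans (mul_le_of_le_one_right (by positivity) (by norm_num))

lemma tendsto_const_div_sqrt_natCast (C : ℝ) :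
    Tendsto (fun n : ℕ ↦ C / √n) atTop (𝓝 0) :=
  tendsto_const_nhds.div_atTop (Real.tendsto_sqrt_atTop.comp tendsto_natCast_atTop_atTop)

section StandardizedBernoulli

variable {p : ℝ}

lemma z11_eq (hp : p ∈ Set.Ioo 0 1) : z11 p = (1 - p) / √(p * (1 - p)) := by
  have hp0 := hp.1
  have hq : 0 < 1 - p := sub_pos.2 hp.2
  rw [z11, Real.sqrt_eq_iff_mul_self_eq (by positivity) (by positivity), div_mul_div_comm,
    Real.mul_self_sqrt (by positivity)]
  field_simp

lemma z10_eq (hp : p ∈ Set.Ioo 0 1) : z10 p = -(p / √(p * (1 - p))) := by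
  have hp0 := hp.1
  have hq : 0 < 1 - p := sub_pos.2 hp.2
  rw [z10, neg_inj, Real.sqrt_eq_iff_mul_self_eq (by positivity) (by positivity),
    div_mul_div_comm, Real.mul_self_sqrt (by positivity)]
  field_simp

lemma z11_pos (hp : p ∈ Set.Ioo 0 1) : 0 < z11 p :=
  Real.sqrt_pos.2 (div_pos (sub_pos.2 hp.2) hp.1)

lemma z10_neg (hp : p ∈ Set.Ioo 0 1) : z10 p < 0 :=
  neg_neg_of_pos (Real.sqrt_pos.2 (div_pos hp.1 (sub_pos.2 hp.2)))

lemma bernoulli_mean (hp : p ∈ Set.Ioo 0 1) : p * z11 p + (1 - p) * z10 p = 0 := by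
  rw [z11_eq hp, z10_eq hp]
  ring

lemma bernoulli_variance (hp : p ∈ Set.Ioo 0 1) :
    p * z11 p ^ 2 + (1 - p) * z10 p ^ 2 = 1 := by
  have hp0 := hp.1
  have hq : 0 < 1 - p := sub_pos.2 hp.2
  rw [z11, z10, neg_sq, Real.sq_sqrt (by positivity), Real.sq_sqrt (by positivity)]
  field_simp
  ring

lemma z11_le_neg_z10 (hp : p ∈ Set.Ico (1 / 2) 1) : z11 p ≤ -z10 p := by
  have hq : 0 < 1 - p := sub_pos.2 hp.2
  rw [z10, neg_neg, z11]
  gcongr <;> linarith [hp.1]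

lemma zpt_eq (hp : p ∈ Set.Ioo 0 1) (n k : ℕ) :
    zpt p n k = (k * z11 p + (n - k) * z10 p) / √n := by
  have hpq : 0 < p * (1 - p) := mul_pos hp.1 (sub_pos.2 hp.2)
  have hsqrt : √(n * p * (1 - p)) = √(p * (1 - p)) * √n := by
    rw [← Real.sqrt_mul hpq.le]
    ring_nf
  rw [zpt, z11_eq hp, z10_eq hp, hsqrt, ← div_div]
  push_cast
  ring

/-- The moment generating function `θ ↦ 𝔼 exp (θ Z)`, at complex arguments, of the standardized
Bernoulli variable `Z`, which is `z11 p` with probability `p` and `z10 p` otherwise. -/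
noncomputable def bernoulliMGF (p : ℝ) (θ : ℂ) : ℂ :=
  p * Complex.exp (θ * z11 p) + (1 - p) * Complex.exp (θ * z10 p)

lemma norm_bernoulliMGF_sub_le (hp : p ∈ Set.Ioo 0 1) {θ : ℂ}
    (hθ : ‖θ‖ * (z11 p - z10 p) ≤ 1) :
    ‖bernoulliMGF p θ - (1 + θ ^ 2 / 2)‖ ≤ (‖θ‖ * (z11 p - z10 p)) ^ 3 := by
  have hmean : (p * z11 p + (1 - p) * z10 p : ℂ) = 0 := by exact_mod_cast bernoulli_mean hp
  have hvar : (p * z11 p ^ 2 + (1 - p) * z10 p ^ 2 : ℂ) = 1 := by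
    exact_mod_cast bernoulli_variance hp
  have taylor {z : ℝ} (hz : |z| ≤ z11 p - z10 p) :
      ‖Complex.exp (θ * z) - (1 + θ * z + (θ * z) ^ 2 / 2)‖ ≤
        (‖θ‖ * (z11 p - z10 p)) ^ 3 := by
    have hle : ‖θ * z‖ ≤ ‖θ‖ * (z11 p - z10 p) := by
      rw [norm_mul, Complex.norm_real, Real.norm_eq_abs]
      gcongr
    exact (norm_exp_sub_taylor_two_le (hle.trans hθ)).trans (by gcongr)
  have hz11 := z11_pos hp
  have hz10 := z10_neg hp
  have hq : 0 ≤ 1 - p := sub_nonneg.2 hp.2.le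
  have hnorm_p : ‖(p : ℂ)‖ = p := by rw [Complex.norm_real, Real.norm_of_nonneg hp.1.le]
  have hnorm_q : ‖(1 - p : ℂ)‖ = 1 - p := by
    rw [← Complex.ofReal_one, ← Complex.ofReal_sub, Complex.norm_real, Real.norm_of_nonneg hq]
  calc ‖bernoulliMGF p θ - (1 + θ ^ 2 / 2)‖
      = ‖p * (Complex.exp (θ * z11 p) - (1 + θ * z11 p + (θ * z11 p) ^ 2 / 2)) +
          (1 - p) * (Complex.exp (θ * z10 p) - (1 + θ * z10 p + (θ * z10 p) ^ 2 / 2))‖ := by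
        rw [bernoulliMGF]
        congr 1
        linear_combination θ * hmean + θ ^ 2 / 2 * hvar
    _ ≤ p * (‖θ‖ * (z11 p - z10 p)) ^ 3 + (1 - p) * (‖θ‖ * (z11 p - z10 p)) ^ 3 := by
        refine norm_add_le_of_le ?_ ?_ <;> rw [norm_mul]
        · rw [hnorm_p]
          exact mul_le_mul_of_nonneg_left
            (taylor (by rw [abs_of_pos hz11]; linarith)) hp.1.le
        · rw [hnorm_q]
          exact mul_le_mul_of_nonneg_left
            (taylor (by rw [abs_of_neg hz10]; linarith)) hq
    _ = (‖θ‖ * (z11 p - z10 p)) ^ 3 := by ring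

lemma norm_natCast_mul_bernoulliMGF_sub_le (hp : p ∈ Set.Ioo 0 1) {n : ℕ} (hn : n ≠ 0) {θ : ℂ}
    (hθ : ‖θ‖ * (z11 p - z10 p) ≤ √n) :
    ‖n * (bernoulliMGF p (θ / √n) - 1) - θ ^ 2 / 2‖ ≤ (‖θ‖ * (z11 p - z10 p)) ^ 3 / √n := by
  have hs : 0 < √(n : ℝ) := by positivity
  have hs2 : (√(n : ℝ) : ℂ) ^ 2 = n := by exact_mod_cast Real.sq_sqrt n.cast_nonneg
  have : (√(n : ℝ) : ℂ) ≠ 0 := by exact_mod_cast hs.ne'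
  have hnorm : ‖θ / √(n : ℝ)‖ * (z11 p - z10 p) = ‖θ‖ * (z11 p - z10 p) / √n := by
    rw [norm_div, Complex.norm_real, Real.norm_of_nonneg hs.le]
    ring
  have hle := norm_bernoulliMGF_sub_le hp (θ := θ / √(n : ℝ))
    (by rwa [hnorm, div_le_one hs])
  calc ‖n * (bernoulliMGF p (θ / √n) - 1) - θ ^ 2 / 2‖
      = √n ^ 2 * ‖bernoulliMGF p (θ / √n) - (1 + (θ / √n) ^ 2 / 2)‖ := by
        have hn0 : (n : ℂ) ≠ 0 := Nat.cast_ne_zero.2 hn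
        have hfactor : n * (bernoulliMGF p (θ / √n) - 1) - θ ^ 2 / 2 =
            n * (bernoulliMGF p (θ / √n) - (1 + (θ / √n) ^ 2 / 2)) := by
          rw [div_pow, hs2]
          field_simp
          ring
        rw [hfactor, norm_mul, Complex.norm_natCast, Real.sq_sqrt n.cast_nonneg]
    _ ≤ √n ^ 2 * (‖θ‖ * (z11 p - z10 p) / √n) ^ 3 := by
        rw [← hnorm]
        gcongr
    _ = (‖θ‖ * (z11 p - z10 p)) ^ 3 / √n := by
        field_simp

lemma tendsto_bernoulliMGF_pow (hp : p ∈ Set.Ioo 0 1) {θ : ℕ → ℂ} {θ₀ : ℂ}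
    (hθ : Tendsto θ atTop (𝓝 θ₀)) :
    Tendsto (fun n : ℕ ↦ bernoulliMGF p (θ n / √n) ^ n) atTop
      (𝓝 (Complex.exp (θ₀ ^ 2 / 2))) := by
  have hbound : ∀ᶠ n : ℕ in atTop,
      ‖n * (bernoulliMGF p (θ n / √n) - 1) - θ n ^ 2 / 2‖ ≤
        ((‖θ₀‖ + 1) * (z11 p - z10 p)) ^ 3 / √n := by
    have hB : 0 ≤ z11 p - z10 p := by linarith [z11_pos hp, z10_neg hp]
    have hsqrt : Tendsto (fun n : ℕ ↦ √(n : ℝ)) atTop atTop :=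
      Real.tendsto_sqrt_atTop.comp tendsto_natCast_atTop_atTop
    filter_upwards [hθ.norm.eventually (gt_mem_nhds (lt_add_one ‖θ₀‖)), eventually_ne_atTop 0,
      hsqrt.eventually_ge_atTop ((‖θ₀‖ + 1) * (z11 p - z10 p))] with n hθn hn hsn
    have hle : ‖θ n‖ * (z11 p - z10 p) ≤ (‖θ₀‖ + 1) * (z11 p - z10 p) := by gcongr
    exact (norm_natCast_mul_bernoulliMGF_sub_le hp hn (hle.trans hsn)).trans (by gcongr)
  have hlim : Tendsto (fun n : ℕ ↦ n * (bernoulliMGF p (θ n / √n) - 1)) atTop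
      (𝓝 (θ₀ ^ 2 / 2)) := by
    simpa using (squeeze_zero_norm' hbound (tendsto_const_div_sqrt_natCast _)).add
      ((hθ.pow 2).div_const 2)
  simpa using Complex.tendsto_one_add_pow_exp_of_tendsto hlim

lemma sum_binProb_mul_exp_zpt (hp : p ∈ Set.Ioo 0 1) (n : ℕ) (θ : ℂ) :
    ∑ k ∈ Finset.range (n + 1), binProb p n k * Complex.exp (θ * zpt p n k) =
      bernoulliMGF p (θ / √n) ^ n := by
  rw [bernoulliMGF, add_pow]
  refine Finset.sum_congr rfl fun k hk ↦ ?_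
  have hkn : k ≤ n := Nat.lt_succ_iff.1 (Finset.mem_range.1 hk)
  have hexp : Complex.exp (θ * zpt p n k) =
      Complex.exp (θ / √n * z11 p) ^ k * Complex.exp (θ / √n * z10 p) ^ (n - k) := by
    rw [zpt_eq hp, ← Complex.exp_nat_mul, ← Complex.exp_nat_mul, ← Complex.exp_add]
    push_cast [Nat.cast_sub hkn]
    ring_nf
  rw [hexp, binProb, mul_pow, mul_pow]
  push_cast
  ring

end StandardizedBernoulli

section Coefficients

variable {p : ℝ} {n : ℕ}

lemma exp_sub_one_eq_two_mul_exp_mul_sinh (x : ℝ) :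
    Real.exp x - 1 = 2 * Real.exp (x / 2) * Real.sinh (x / 2) := by
  have hx : Real.exp x = Real.exp (x / 2) * Real.exp (x / 2) := by
    rw [← Real.exp_add, add_halves]
  rw [hx, Real.sinh_eq, Real.exp_neg]
  field_simp

-- In `exp x - 1 = 2 exp (x / 2) sinh (x / 2)` the factors `exp (x / 2)` produce the limit `1 / 2`.
lemma aCoef_eq (hp : p ∈ Set.Ioo 0 1) (hn : n ≠ 0) :
    aCoef p n = 1 / 2 + √n / (z11 p - z10 p) *
      Real.log (-z10 p * Real.sinh (z11 p / √n / 2) /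
        (z11 p * Real.sinh (-z10 p / √n / 2))) := by
  have hz11 := z11_pos hp
  have hz10 : 0 < -z10 p := neg_pos.2 (z10_neg hp)
  have hq : 0 < 1 - p := sub_pos.2 hp.2
  have : 0 < Real.sinh (z11 p / √n / 2) := Real.sinh_pos_iff.2 (by positivity)
  have : 0 < Real.sinh (-z10 p / √n / 2) := Real.sinh_pos_iff.2 (by positivity)
  have hodds : p / (1 - p) = -z10 p / z11 p := by
    rw [div_eq_div_iff hq.ne' hz11.ne']
    linarith [bernoulli_mean hp]
  have hfactor : p / (1 - p) * (Real.exp (z11 p / √n) - 1) / (1 - Real.exp (z10 p / √n)) =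
      Real.exp ((z11 p - z10 p) / √n / 2) * (-z10 p * Real.sinh (z11 p / √n / 2) /
        (z11 p * Real.sinh (-z10 p / √n / 2))) := by
    have hexp : Real.exp ((z11 p - z10 p) / √n / 2) =
        Real.exp (z11 p / √n / 2) / Real.exp (z10 p / √n / 2) := by
      rw [← Real.exp_sub]
      ring_nf
    have hsinh : Real.sinh (z10 p / √n / 2) = -Real.sinh (-z10 p / √n / 2) := by
      rw [neg_div, neg_div, Real.sinh_neg, neg_neg]
    rw [hodds, hexp, exp_sub_one_eq_two_mul_exp_mul_sinh, ← neg_sub (Real.exp (z10 p / √n)),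
      exp_sub_one_eq_two_mul_exp_mul_sinh (z10 p / √n), hsinh]
    field_simp
  rw [aCoef, hfactor, Real.log_mul (Real.exp_pos _).ne' (by positivity), Real.log_exp, mul_add]
  congr 1
  have : z11 p - z10 p ≠ 0 := by linarith
  field_simp

lemma aCoef_le_half (hp : p ∈ Set.Ico (1 / 2) 1) (hn : n ≠ 0) : aCoef p n ≤ 1 / 2 := by
  have hp' : p ∈ Set.Ioo 0 1 := ⟨by linarith [hp.1], hp.2⟩
  have hz11 := z11_pos hp'
  have hz10 : 0 < -z10 p := neg_pos.2 (z10_neg hp')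
  have : 0 < Real.sinh (z11 p / √n / 2) := Real.sinh_pos_iff.2 (by positivity)
  have : 0 < Real.sinh (-z10 p / √n / 2) := Real.sinh_pos_iff.2 (by positivity)
  have hsinh : Real.sinh (z11 p / √n / 2) ≤
      z11 p / -z10 p * Real.sinh (-z10 p / √n / 2) := by
    have hc : z11 p / -z10 p ∈ Set.Icc 0 1 :=
      ⟨by positivity, div_le_one_of_le₀ (z11_le_neg_z10 hp) hz10.le⟩
    convert sinh_mul_le hc (x := -z10 p / √n / 2) (by positivity) using 2
    rw [← mul_div_assoc, ← mul_div_assoc, div_mul_cancel₀ _ hz10.ne']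
  have hlog : Real.log (-z10 p * Real.sinh (z11 p / √n / 2) /
      (z11 p * Real.sinh (-z10 p / √n / 2))) ≤ 0 := by
    refine Real.log_nonpos (by positivity) (div_le_one_of_le₀ ?_ (by positivity))
    rwa [div_mul_eq_mul_div, le_div_iff₀' hz10] at hsinh
  rw [aCoef_eq hp' hn, add_le_iff_nonpos_right]
  exact mul_nonpos_of_nonneg_of_nonpos (div_nonneg (Real.sqrt_nonneg _) (by linarith)) hlog

lemma half_sub_le_aCoef (hp : p ∈ Set.Ioo 0 1) (hn : n ≠ 0) :
    1 / 2 - z10 p ^ 2 / (8 * (z11 p - z10 p)) / √n ≤ aCoef p n := by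
  have hz11 := z11_pos hp
  have hz10 : 0 < -z10 p := neg_pos.2 (z10_neg hp)
  have : 0 < Real.sinh (-z10 p / √n / 2) := Real.sinh_pos_iff.2 (by positivity)
  have hlog : -((-z10 p / √n / 2) ^ 2 / 2) ≤
      Real.log (-z10 p * Real.sinh (z11 p / √n / 2) / (z11 p * Real.sinh (-z10 p / √n / 2))) := by
    have hsinh11 : z11 p / √n / 2 ≤ Real.sinh (z11 p / √n / 2) :=
      Real.self_le_sinh_iff.2 (by positivity)
    have hratio : 0 < -z10 p * Real.sinh (z11 p / √n / 2) /
        (z11 p * Real.sinh (-z10 p / √n / 2)) := by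
      have : 0 < Real.sinh (z11 p / √n / 2) := Real.sinh_pos_iff.2 (by positivity)
      positivity
    rw [Real.le_log_iff_exp_le hratio, le_div_iff₀ (by positivity)]
    calc Real.exp (-((-z10 p / √n / 2) ^ 2 / 2)) * (z11 p * Real.sinh (-z10 p / √n / 2))
        ≤ Real.exp (-((-z10 p / √n / 2) ^ 2 / 2)) *
            (z11 p * (-z10 p / √n / 2 * Real.exp ((-z10 p / √n / 2) ^ 2 / 2))) := by
          gcongr
          exact sinh_le_mul_exp_sq_half (by positivity)
      _ = -z10 p * (z11 p / √n / 2) := by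
          rw [Real.exp_neg]
          field_simp
      _ ≤ -z10 p * Real.sinh (z11 p / √n / 2) := by gcongr
  have hscale : 0 ≤ √n / (z11 p - z10 p) := div_nonneg (Real.sqrt_nonneg _) (by linarith)
  rw [aCoef_eq hp hn]
  calc 1 / 2 - z10 p ^ 2 / (8 * (z11 p - z10 p)) / √n
      = 1 / 2 + √n / (z11 p - z10 p) * -((-z10 p / √n / 2) ^ 2 / 2) := by
        have : z11 p - z10 p ≠ 0 := by linarith
        have : √(n : ℝ) ≠ 0 := by positivity
        field_simp
        ring
    _ ≤ _ := by gcongr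

lemma tendsto_aCoef (hp : p ∈ Set.Ico (1 / 2) 1) :
    Tendsto (aCoef p) atTop (𝓝 (1 / 2)) := by
  have hlower : Tendsto (fun n : ℕ ↦ 1 / 2 - z10 p ^ 2 / (8 * (z11 p - z10 p)) / √n) atTop
      (𝓝 (1 / 2)) := by
    simpa using tendsto_const_nhds.sub (tendsto_const_div_sqrt_natCast _)
  refine tendsto_of_tendsto_of_tendsto_of_le_of_le' hlower tendsto_const_nhds ?_ ?_ <;>
    filter_upwards [eventually_ne_atTop 0] with n hn
  · exact half_sub_le_aCoef ⟨by linarith [hp.1], hp.2⟩ hn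
  · exact aCoef_le_half hp hn

lemma bCoef_eq (p : ℝ) (n : ℕ) :
    bCoef p n = n * Real.log (bernoulliMGF p (-aCoef p n / √n)).re := by
  have hmgf : bernoulliMGF p (-aCoef p n / √n) =
      ((1 - p) * Real.exp (-z10 p * aCoef p n / √n) +
        p * Real.exp (-z11 p * aCoef p n / √n) : ℝ) := by
    rw [bernoulliMGF]
    push_cast
    ring_nf
  rw [bCoef, hmgf, Complex.ofReal_re]

lemma ofReal_re_bernoulliMGF (p θ : ℝ) :
    ((bernoulliMGF p θ).re : ℂ) = bernoulliMGF p θ := by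
  rw [bernoulliMGF]
  norm_cast

lemma re_bernoulliMGF_pos (hp : p ∈ Set.Ioo 0 1) (θ : ℝ) : 0 < (bernoulliMGF p θ).re := by
  have hp0 := hp.1
  have hq : 0 < 1 - p := sub_pos.2 hp.2
  rw [bernoulliMGF]
  norm_cast
  positivity

lemma exp_bCoef (hp : p ∈ Set.Ioo 0 1) (n : ℕ) :
    Complex.exp (bCoef p n) = bernoulliMGF p (-aCoef p n / √n) ^ n := by
  have hθ : (-aCoef p n / √n : ℂ) = ((-aCoef p n / √n : ℝ) : ℂ) := by push_cast; rfl
  rw [← Complex.ofReal_exp, bCoef_eq, hθ, Real.exp_nat_mul,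
    Real.exp_log (re_bernoulliMGF_pos hp _), Complex.ofReal_pow, ofReal_re_bernoulliMGF]

lemma tendsto_bCoef (hp : p ∈ Set.Ico (1 / 2) 1) :
    Tendsto (bCoef p) atTop (𝓝 (1 / 8)) := by
  have hp' : p ∈ Set.Ioo 0 1 := ⟨by linarith [hp.1], hp.2⟩
  have ha : Tendsto (fun n ↦ (-aCoef p n : ℂ)) atTop (𝓝 ((-(1 / 2) : ℝ) : ℂ)) := by
    exact_mod_cast (Complex.continuous_ofReal.tendsto _).comp (tendsto_aCoef hp).neg
  have hexp : Tendsto (fun n ↦ Real.exp (bCoef p n)) atTop (𝓝 (Real.exp (1 / 8))) := by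
    rw [← tendsto_ofReal_iff]
    refine (tendsto_bernoulliMGF_pow hp' ha).congr (fun n ↦ ?_) |>.trans_eq ?_
    · rw [Complex.ofReal_exp, exp_bCoef hp']
    · push_cast
      norm_num
  simpa using hexp.log (Real.exp_ne_zero _)

lemma eventually_bCoef_le (hp : p ∈ Set.Ico (1 / 2) 1) :
    ∀ᶠ n : ℕ in atTop, bCoef p n ≤ 1 / 8 + (z11 p - z10 p) ^ 3 / √n := by
  have hp' : p ∈ Set.Ioo 0 1 := ⟨by linarith [hp.1], hp.2⟩
  have hB : 0 ≤ z11 p - z10 p := by linarith [z11_pos hp', z10_neg hp']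
  have hsqrt : Tendsto (fun n : ℕ ↦ √(n : ℝ)) atTop atTop :=
    Real.tendsto_sqrt_atTop.comp tendsto_natCast_atTop_atTop
  filter_upwards [(tendsto_aCoef hp).eventually_const_lt (by norm_num : (0 : ℝ) < 1 / 2),
    eventually_ne_atTop 0, hsqrt.eventually_ge_atTop (z11 p - z10 p)] with n ha hn hsn
  have ha' := aCoef_le_half hp hn
  have hnorm : ‖(-aCoef p n : ℂ)‖ ≤ 1 := by
    rw [norm_neg, Complex.norm_real, Real.norm_of_nonneg ha.le]
    linarith
  have htaylor := (norm_natCast_mul_bernoulliMGF_sub_le hp' hn (θ := -aCoef p n)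
    ((mul_le_of_le_one_left hB hnorm).trans hsn))
  have hθ : (-aCoef p n / √n : ℂ) = ((-aCoef p n / √n : ℝ) : ℂ) := by push_cast; rfl
  set M := (bernoulliMGF p (-aCoef p n / √n)).re with hM
  have hre : n * (M - 1) - aCoef p n ^ 2 / 2 ≤ (z11 p - z10 p) ^ 3 / √n := by
    have hcast : ((n * (M - 1) - aCoef p n ^ 2 / 2 : ℝ) : ℂ) =
        n * (bernoulliMGF p (-aCoef p n / √n) - 1) - (-aCoef p n) ^ 2 / 2 := by
      push_cast
      rw [hM, hθ, ofReal_re_bernoulliMGF, neg_sq]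
    rw [← hcast, Complex.norm_real] at htaylor
    refine (le_abs_self _).trans (htaylor.trans ?_)
    gcongr
    exact mul_le_of_le_one_left hB hnorm
  calc bCoef p n ≤ n * (M - 1) := by
        rw [bCoef_eq]
        have hpos : 0 < M := by rw [hM, hθ]; exact re_bernoulliMGF_pos hp' _
        gcongr
        exact Real.log_le_sub_one_of_pos hpos
    _ ≤ 1 / 8 + (z11 p - z10 p) ^ 3 / √n := by nlinarith

lemma sum_binProb_mul_exp_neg_eq_one (hp : p ∈ Set.Ioo 0 1) (n : ℕ) :
    ∑ k ∈ Finset.range (n + 1), binProb p n k * Real.exp (-aCoef p n * zpt p n k - bCoef p n) =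
      1 := by
  have hsum : ∑ k ∈ Finset.range (n + 1), binProb p n k * Real.exp (-aCoef p n * zpt p n k) =
      Real.exp (bCoef p n) := by
    have h := sum_binProb_mul_exp_zpt hp n (-aCoef p n)
    rw [← exp_bCoef hp] at h
    exact_mod_cast h
  simp only [Real.exp_sub, mul_div_assoc', ← Finset.sum_div, hsum]
  exact div_self (Real.exp_ne_zero _)

end Coefficients

section StandardizedLogDensity

/-- The points `w_{n,k} = 2 a_n z_{n,k} + 2 b_n - 1/4`. In this parametrization the martingale
density is `exp (-w / 2 - 1 / 8)`, the same function of `w` for all `n` and in the Gaussian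
limit. -/
noncomputable def logDensityPt (p : ℝ) (n k : ℕ) : ℝ :=
  2 * aCoef p n * zpt p n k + (2 * bCoef p n - 1 / 4)

/-- The law of `w_{n,k}` when `k` is binomially distributed with parameters `n` and `p`. -/
noncomputable def logDensityLaw (p : unitInterval) (n : ℕ) : ProbabilityMeasure ℝ :=
  ⟨(ProbabilityTheory.binomial n p).map (logDensityPt p n),
    Measure.isProbabilityMeasure_map (measurable_of_countable _).aemeasurable⟩

lemma exp_neg_logDensityPt_div_two_sub (p : ℝ) (n k : ℕ) :
    Real.exp (-logDensityPt p n k / 2 - 1 / 8) = Real.exp (-aCoef p n * zpt p n k - bCoef p n) := by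
  rw [logDensityPt]
  ring_nf

/-- The standard normal law, as a point of the space of probability measures. -/
noncomputable def stdGaussianLaw : ProbabilityMeasure ℝ :=
  ⟨ProbabilityTheory.gaussianReal 0 1, inferInstance⟩

variable {p : unitInterval}

lemma integrable_logDensityLaw {E : Type*} [NormedAddCommGroup E] {f : ℝ → E}
    (hf : StronglyMeasurable f) (n : ℕ) : Integrable f (logDensityLaw p n : Measure ℝ) :=
  (integrable_map_measure hf.aestronglyMeasurable (measurable_of_countable _).aemeasurable).2
    (ProbabilityTheory.integrable_binomial _)

lemma integral_logDensityLaw {E : Type*} [NormedAddCommGroup E] [NormedSpace ℝ E]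
    [CompleteSpace E] {f : ℝ → E} (hf : StronglyMeasurable f) (n : ℕ) :
    ∫ x, f x ∂(logDensityLaw p n : Measure ℝ) =
      ∑ k ∈ Finset.range (n + 1), binProb p n k • f (logDensityPt p n k) := by
  rw [logDensityLaw, ProbabilityMeasure.coe_mk,
    integral_map (measurable_of_countable _).aemeasurable hf.aestronglyMeasurable,
    ProbabilityTheory.integral_binomial, Nat.range_succ_eq_Iic]
  rfl

lemma integral_exp_logDensityLaw (hp : (p : ℝ) ∈ Set.Ioo 0 1) (n : ℕ) :
    ∫ x, Real.exp (-x / 2 - 1 / 8) ∂(logDensityLaw p n : Measure ℝ) = 1 := by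
  rw [integral_logDensityLaw (by fun_prop)]
  simp only [exp_neg_logDensityPt_div_two_sub, smul_eq_mul]
  exact sum_binProb_mul_exp_neg_eq_one hp n

lemma charFun_logDensityLaw (hp : (p : ℝ) ∈ Set.Ioo 0 1) (n : ℕ) (t : ℝ) :
    charFun (logDensityLaw p n : Measure ℝ) t =
      Complex.exp (t * (2 * bCoef p n - 1 / 4) * Complex.I) *
        bernoulliMGF p (2 * t * aCoef p n * Complex.I / √n) ^ n := by
  rw [charFun_apply_real, integral_logDensityLaw (by fun_prop), ← sum_binProb_mul_exp_zpt hp,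
    Finset.mul_sum]
  refine Finset.sum_congr rfl fun k _ ↦ ?_
  rw [Complex.real_smul, mul_left_comm, ← Complex.exp_add, logDensityPt]
  push_cast
  ring_nf

lemma tendsto_logDensityLaw (hp : (p : ℝ) ∈ Set.Ico (1 / 2) 1) :
    Tendsto (logDensityLaw p) atTop (𝓝 stdGaussianLaw) := by
  have hp' : (p : ℝ) ∈ Set.Ioo 0 1 := ⟨by linarith [hp.1], hp.2⟩
  rw [ProbabilityMeasure.tendsto_iff_tendsto_charFun]
  intro t
  have ha : Tendsto (fun n ↦ (aCoef p n : ℂ)) atTop (𝓝 ((1 / 2 : ℝ) : ℂ)) :=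
    (Complex.continuous_ofReal.tendsto _).comp (tendsto_aCoef hp)
  have hb : Tendsto (fun n ↦ (bCoef p n : ℂ)) atTop (𝓝 ((1 / 8 : ℝ) : ℂ)) :=
    (Complex.continuous_ofReal.tendsto _).comp (tendsto_bCoef hp)
  have hshift := ((((hb.const_mul 2).sub_const (1 / 4)).const_mul (t : ℂ)).mul_const
    Complex.I).cexp
  have hpow := tendsto_bernoulliMGF_pow hp' ((ha.const_mul (2 * (t : ℂ))).mul_const Complex.I)
  refine ((hshift.mul hpow).congr fun n ↦ (charFun_logDensityLaw hp' n t).symm).trans_eq ?_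
  rw [stdGaussianLaw, ProbabilityMeasure.coe_mk, ProbabilityTheory.charFun_gaussianReal,
    ← Complex.exp_add]
  congr 2
  push_cast
  linear_combination (t ^ 2 / 2 : ℂ) * Complex.I_sq

end StandardizedLogDensity

section LogDensityTail

lemma logDensityPt_le_one {p : ℝ} {n k : ℕ} (ha : 0 ≤ aCoef p n) (hb : bCoef p n ≤ 5 / 8)
    (hk : (k : ℝ) ≤ n * p) : logDensityPt p n k ≤ 1 := by
  have hz : zpt p n k ≤ 0 :=
    div_nonpos_of_nonpos_of_nonneg (by push_cast; linarith) (Real.sqrt_nonneg _)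
  rw [logDensityPt]
  nlinarith [mul_nonpos_of_nonneg_of_nonpos ha hz]

lemma logDensityPt_le_add_div {p : ℝ} (hp : p ∈ Set.Ioo 0 1) {n k : ℕ} {B : ℝ} (hn : n ≠ 0)
    (ha : aCoef p n ≤ 1 / 2) (hb : bCoef p n ≤ 1 / 8 + B / √n) (hk : n * p ≤ k) :
    logDensityPt p n k ≤
      (k + 2 * B * √(p * (1 - p)) - n * p) / √(n * p * (1 - p)) := by
  have hpq : 0 < p * (1 - p) := mul_pos hp.1 (sub_pos.2 hp.2)
  have hz : 0 ≤ zpt p n k := div_nonneg (by push_cast; linarith) (Real.sqrt_nonneg _)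
  have hshift : (k + 2 * B * √(p * (1 - p)) - n * p) / √(n * p * (1 - p)) =
      zpt p n k + 2 * (B / √n) := by
    have hsqrt : √(n * p * (1 - p)) = √n * √(p * (1 - p)) := by
      rw [mul_assoc, Real.sqrt_mul n.cast_nonneg]
    rw [zpt, hsqrt]
    push_cast
    have : √(n : ℝ) ≠ 0 := by positivity
    field_simp
    ring
  rw [hshift, logDensityPt]
  nlinarith

lemma exists_integral_logDensityLaw_le {p : unitInterval} (hp : (p : ℝ) ∈ Set.Ico (1 / 2) 1) :
    ∃ C, ∀ᶠ n in atTop, ∀ g : ℝ → ℝ, Monotone g → 0 ≤ g → g 1 = 0 →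
      Integrable g (ProbabilityTheory.gaussianReal 0 1) →
      ∫ x, g x ∂(logDensityLaw p n : Measure ℝ) ≤
        C * ∫ x, g x ∂ProbabilityTheory.gaussianReal 0 1 := by
  have hp' : (p : ℝ) ∈ Set.Ioo 0 1 := ⟨by linarith [hp.1], hp.2⟩
  have hpq : 0 < p * (1 - p : ℝ) := mul_pos hp'.1 (sub_pos.2 hp.2)
  have hB : 0 ≤ (z11 p - z10 p) ^ 3 := by
    have : 0 ≤ z11 p - z10 p := by linarith [z11_pos hp', z10_neg hp']
    positivity
  obtain ⟨C, htail⟩ := exists_sum_binProb_tail_le hp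
    (m := 2 * (z11 p - z10 p) ^ 3 * √(p * (1 - p))) (by positivity)
  have hvar : ∀ᶠ n : ℕ in atTop, 2 ≤ n * (p : ℝ) * (1 - p) := by
    have : Tendsto (fun n : ℕ ↦ n * (p : ℝ) * (1 - p)) atTop atTop :=
      (tendsto_natCast_atTop_atTop.atTop_mul_const hp'.1).atTop_mul_const (sub_pos.2 hp.2)
    exact this.eventually_ge_atTop 2
  refine ⟨C, ?_⟩
  filter_upwards [hvar, eventually_ne_atTop 0, eventually_bCoef_le hp,
    (tendsto_bCoef hp).eventually_le_const (by norm_num : (1 / 8 : ℝ) < 5 / 8),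
    (tendsto_aCoef hp).eventually_const_le (by norm_num : (0 : ℝ) < 1 / 2)]
    with n hn2 hn hb hb' ha g hg_mono hg_nonneg hg_one hg_int
  have hceil : ⌈n * (p : ℝ)⌉₊ ≤ n + 1 :=
    Nat.ceil_le.2 (by push_cast; nlinarith [hp.2, n.cast_nonneg (α := ℝ)])
  have hlow : ∑ k ∈ Finset.range ⌈n * (p : ℝ)⌉₊, binProb p n k * g (logDensityPt p n k) = 0 := by
    refine Finset.sum_eq_zero fun k hk ↦ ?_
    have hle := logDensityPt_le_one ha hb' (Nat.lt_ceil.1 (Finset.mem_range.1 hk)).le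
    rw [le_antisymm ((hg_mono hle).trans_eq hg_one) (hg_nonneg _), mul_zero]
  rw [integral_logDensityLaw hg_mono.measurable.stronglyMeasurable,
    integral_gaussianReal_eq_integral_mul_normalPdf]
  simp only [smul_eq_mul]
  rw [← Finset.sum_range_add_sum_Ico _ hceil, hlow, zero_add]
  refine (Finset.sum_le_sum fun k hk ↦ ?_).trans
    (htail n hn2 g hg_mono hg_nonneg (integrable_gaussianReal_iff.1 hg_int))
  have hk' : n * (p : ℝ) ≤ k := Nat.ceil_le.1 (Finset.mem_Ico.1 hk).1
  exact mul_le_mul_of_nonneg_left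
    (hg_mono (logDensityPt_le_add_div hp' hn (aCoef_le_half hp hn) hb hk'))
    (binProb_nonneg ⟨hp'.1.le, hp.2.le⟩ n k)

end LogDensityTail

section Limsup

variable {p : unitInterval} {G : ℝ → ℝ}

lemma eventually_integral_logDensityLaw_le (hp : (p : ℝ) ∈ Set.Ico (1 / 2) 1)
    (hG_mono : Monotone G) (hG_cont : Continuous G)
    (hG_int : Integrable G (stdGaussianLaw : Measure ℝ)) {ε : ℝ} (hε : 0 < ε) :
    ∀ᶠ n in atTop, ∫ x, G x ∂(logDensityLaw p n : Measure ℝ) ≤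
      (∫ x, G x ∂(stdGaussianLaw : Measure ℝ)) + ε := by
  obtain ⟨C, htail⟩ := exists_integral_logDensityLaw_le hp
  refine eventually_integral_le_integral_add (C := C) (tendsto_logDensityLaw hp) hG_cont
    (integrable_logDensityLaw hG_cont.stronglyMeasurable) hG_int ?_ hε
  filter_upwards [tendsto_natCast_atTop_atTop.eventually_ge_atTop (G 1)] with j hj
  filter_upwards [htail] with n hn
  exact hn _ (fun a b hab ↦ max_le_max_right 0 (sub_le_sub_right (hG_mono hab) _))
    (fun x ↦ le_max_right _ _) (max_eq_right (sub_nonpos.2 hj))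
    (hG_int.sub (integrable_const _)).pos_part

lemma integrable_exp_stdGaussianLaw :
    Integrable (fun x ↦ Real.exp (-x / 2 - 1 / 8)) (stdGaussianLaw : Measure ℝ) := by
  have h := (ProbabilityTheory.integrable_exp_mul_gaussianReal (μ := 0) (v := 1)
    (-1 / 2)).mul_const (Real.exp (-1 / 8))
  refine h.congr (ae_of_all _ fun x ↦ ?_)
  simp only [← Real.exp_add]
  ring_nf

lemma integral_sub_const_sub_exp_logDensityLaw (hp : (p : ℝ) ∈ Set.Ioo 0 1) (hG_cont : Continuous G)
    (c d : ℝ) (n : ℕ) :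
    ∫ x, (G x - (c - d * Real.exp (-x / 2 - 1 / 8))) ∂(logDensityLaw p n : Measure ℝ) =
      (∫ x, G x ∂(logDensityLaw p n : Measure ℝ)) - (c - d) := by
  have hint {f : ℝ → ℝ} (hf : Continuous f) :
      Integrable f (logDensityLaw p n : Measure ℝ) :=
    integrable_logDensityLaw hf.stronglyMeasurable n
  rw [integral_sub (hint hG_cont) (hint (by fun_prop)),
    integral_sub (integrable_const c) (hint (by fun_prop)), integral_const_mul,
    integral_exp_logDensityLaw hp, integral_const]
  simp

lemma tendsto_integral_logDensityLaw_atTop (hp : (p : ℝ) ∈ Set.Ico (1 / 2) 1)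
    (hG_cont : Continuous G) {c d : ℝ}
    (hG_lower : ∀ x, c - d * Real.exp (-x / 2 - 1 / 8) ≤ G x)
    (hG_not : ¬ Integrable G (stdGaussianLaw : Measure ℝ)) :
    Tendsto (fun n ↦ ∫ x, G x ∂(logDensityLaw p n : Measure ℝ)) atTop atTop := by
  set minorant : ℝ → ℝ := fun x ↦ c - d * Real.exp (-x / 2 - 1 / 8) with hminorant
  have hminorant_cont : Continuous minorant := by fun_prop
  have hminorant_int : Integrable minorant (stdGaussianLaw : Measure ℝ) :=
    (integrable_const c).sub (integrable_exp_stdGaussianLaw.const_mul d)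
  have hdiff : Tendsto (fun n ↦ ∫ x, (G x - minorant x) ∂(logDensityLaw p n : Measure ℝ))
      atTop atTop := by
    refine tendsto_integral_atTop_of_not_integrable (tendsto_logDensityLaw hp)
      (hG_cont.sub hminorant_cont) (fun x ↦ sub_nonneg.2 (hG_lower x))
      (integrable_logDensityLaw (hG_cont.sub hminorant_cont).stronglyMeasurable) fun h ↦ hG_not ?_
    exact (h.add hminorant_int).congr (ae_of_all _ fun x ↦ sub_add_cancel (G x) (minorant x))
  simp only [hminorant,
    integral_sub_const_sub_exp_logDensityLaw ⟨by linarith [hp.1], hp.2⟩ hG_cont] at hdiff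
  simpa using tendsto_atTop_add_const_right _ (c - d) hdiff

lemma limsup_integral_logDensityLaw_le (hp : (p : ℝ) ∈ Set.Ico (1 / 2) 1)
    (hG_mono : Monotone G) (hG_cont : Continuous G) {c d : ℝ}
    (hG_lower : ∀ x, c - d * Real.exp (-x / 2 - 1 / 8) ≤ G x) :
    limsup (fun n ↦ ∫ x, G x ∂(logDensityLaw p n : Measure ℝ)) atTop ≤
      ∫ x, G x ∂(stdGaussianLaw : Measure ℝ) := by
  by_cases hG_int : Integrable G (stdGaussianLaw : Measure ℝ)
  · have hbelow (n : ℕ) : c - d ≤ ∫ x, G x ∂(logDensityLaw p n : Measure ℝ) := by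
      rw [← sub_nonneg,
        ← integral_sub_const_sub_exp_logDensityLaw ⟨by linarith [hp.1], hp.2⟩ hG_cont]
      exact integral_nonneg fun x ↦ sub_nonneg.2 (hG_lower x)
    exact le_of_forall_pos_le_add fun ε hε ↦ limsup_le_of_le
      (isCoboundedUnder_le_of_eventually_le atTop (Eventually.of_forall hbelow))
      (eventually_integral_logDensityLaw_le hp hG_mono hG_cont hG_int hε)
  · -- The integrals tend to `∞`, so both sides are junk values: `limsup` of an unbounded real
    -- sequence and the integral of a non-integrable function are `0`.
    have hlim := tendsto_integral_logDensityLaw_atTop hp hG_cont hG_lower hG_int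
    rw [Real.limsup_of_not_isBoundedUnder (not_isBoundedUnder_of_tendsto_atTop hlim),
      integral_undef hG_int]

end Limsup

theorem limsup_dual_value_functions_general
    (p : ℝ) (hp : p ∈ Set.Ico (1 / 2 : ℝ) 1)
    (U : ℝ → ℝ)
    (hU : ∀ y > 0, BddAbove {r : ℝ | ∃ x > (0 : ℝ), r = U x - x * y})
    (V : ℝ → ℝ) (hV : ∀ y : ℝ, V y = sSup {r : ℝ | ∃ x > (0 : ℝ), r = U x - x * y})
    (v : ℝ → ℝ)
    (hv : ∀ y : ℝ, v y = ∫ t : ℝ, V (y * Real.exp (-t / 2 - 1 / 8)) * normalPdf t)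
    (vn : ℕ → ℝ → ℝ)
    (hvn : ∀ n ≥ 1, ∀ y : ℝ, vn n y =
      ∑ k ∈ Finset.range (n + 1),
        V (y * Real.exp (-(aCoef p n) * zpt p n k - bCoef p n)) * binProb p n k) :
    ∀ y > 0, limsup (fun n => vn n y) atTop ≤ v y := by
  obtain rfl : V = conjugate U := funext hV
  intro y hy
  set G : ℝ → ℝ := fun t ↦ conjugate U (y * Real.exp (-t / 2 - 1 / 8)) with hG
  have hpos (t : ℝ) : 0 < y * Real.exp (-t / 2 - 1 / 8) := by positivity
  have hG_mono : Monotone G := fun s t hst ↦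
    antitoneOn_conjugate hU (hpos t) (hpos s) (by gcongr)
  have hG_cont : Continuous G :=
    ((convexOn_conjugate hU).continuousOn isOpen_Ioi).comp_continuous (by fun_prop) hpos
  have hG_lower (t : ℝ) : U 1 - y * Real.exp (-t / 2 - 1 / 8) ≤ G t := by
    simpa only [one_mul] using sub_mul_le_conjugate (hU _ (hpos t)) one_pos
  let q : unitInterval := ⟨p, by linarith [hp.1], hp.2.le⟩
  have hvn_eq : ∀ᶠ n in atTop, vn n y = ∫ x, G x ∂(logDensityLaw q n : Measure ℝ) := by
    filter_upwards [eventually_ge_atTop 1] with n hn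
    rw [hvn n hn, integral_logDensityLaw hG_cont.stronglyMeasurable]
    simp only [hG, exp_neg_logDensityPt_div_two_sub, smul_eq_mul, mul_comm, q]
  have hv_eq : v y = ∫ x, G x ∂(stdGaussianLaw : Measure ℝ) :=
    (hv y).trans (integral_gaussianReal_eq_integral_mul_normalPdf G).symm
  rw [limsup_congr hvn_eq, hv_eq]
  exact limsup_integral_logDensityLaw_le (p := q) hp hG_mono hG_cont hG_lower

theorem limsup_dual_value_functions
    (p : ℝ) (hp : p ∈ Set.Ico (1 / 2 : ℝ) 1)
    (U : ℝ → ℝ)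
    (hU_mono : StrictMonoOn U (Set.Ioi 0))
    (hU_conc : StrictConcaveOn ℝ (Set.Ioi 0) U)
    (hU_smooth : ContDiffOn ℝ 1 U (Set.Ioi 0))
    (hU_inada_zero : Tendsto (deriv U) (nhdsWithin 0 (Set.Ioi 0)) atTop)
    (hU_inada_infty : Tendsto (deriv U) atTop (nhds 0))
    (V : ℝ → ℝ) (hV : ∀ y : ℝ, V y = sSup {r : ℝ | ∃ x > (0 : ℝ), r = U x - x * y})
    (v : ℝ → ℝ)
    (hv : ∀ y : ℝ, v y = ∫ t : ℝ, V (y * Real.exp (-t / 2 - 1 / 8)) * normalPdf t)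
    (vn : ℕ → ℝ → ℝ)
    (hvn : ∀ n ≥ 1, ∀ y : ℝ, vn n y =
      ∑ k ∈ Finset.range (n + 1),
        V (y * Real.exp (-(aCoef p n) * zpt p n k - bCoef p n)) * binProb p n k) :
    ∀ y > 0, limsup (fun n => vn n y) atTop ≤ v y :=
  limsup_dual_value_functions_general p hp U
    (fun _ hy ↦ bddAbove_conjugate_of_deriv_le hU_mono.monotoneOn
      (hU_smooth.differentiableOn one_ne_zero) hy.le (hU_inada_infty.eventually_le_const hy))
    V hV v hv vn hvn
end

section
/- For n ≥ 1 set b_n = n · log(cosh(1/(2√n))). Then the sequence (b_n) is increasing in n and converges to 1/8 as n → ∞. -/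
open Filter

/-- `b_n = n · log cosh(1/(2√n))`, the normalizing constant of the martingale measure
density in the symmetric binomial approximation of the Black–Scholes model. -/
noncomputable def bSym (n : ℕ) : ℝ := n * Real.log (Real.cosh (1 / (2 * Real.sqrt n)))

/-!
With `t = 1/(4n)`, the number `4 b_n = log (cosh √t) / t` is the slope of the chord from `0` to `t`
of the function `t ↦ log (cosh √t)`. The derivative of this function at `t > 0` is
`tanh √t / (2√t)`, half the slope of a chord from `0` of `tanh`, which is strictly concave on
`[0, ∞)` with derivative `1` at `0`. Hence `log (cosh √t)` is itself strictly concave on `[0, ∞)`: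
the slope of its chord strictly increases as `t` decreases to `0`, and its limit is `1/2`.
-/

open Set Topology

theorem strictAntiOn_div_self_of_strictConcaveOn {𝕜 : Type*} [Field 𝕜] [LinearOrder 𝕜]
    [IsStrictOrderedRing 𝕜] {s : Set 𝕜} {f : 𝕜 → 𝕜} (hf : StrictConcaveOn 𝕜 s f)
    (h0s : 0 ∈ s) (hf0 : f 0 = 0) : StrictAntiOn (fun x ↦ f x / x) (s \ {0}) := by
  intro x hx y hy hxy
  simpa only [hf0, sub_zero] using hf.secant_strict_mono h0s hx.1 hy.1 hx.2 hy.2 hxy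

theorem hasDerivAt_tanh (x : ℝ) : HasDerivAt Real.tanh (1 / Real.cosh x ^ 2) x := by
  have hquot := (Real.hasDerivAt_sinh x).fun_div (Real.hasDerivAt_cosh x) (Real.cosh_pos x).ne'
  rwa [← sq, ← sq, Real.cosh_sq_sub_sinh_sq, ← funext Real.tanh_eq_sinh_div_cosh] at hquot

theorem strictConcaveOn_tanh : StrictConcaveOn ℝ (Ici 0) Real.tanh := by
  refine StrictAntiOn.strictConcaveOn_of_deriv (convex_Ici 0)
    (fun x _ ↦ (hasDerivAt_tanh x).continuousAt.continuousWithinAt) fun x hx y hy hxy ↦ ?_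
  have hcosh : Real.cosh x < Real.cosh y :=
    Real.cosh_strictMonoOn (interior_subset hx) (interior_subset hy) hxy
  rw [(hasDerivAt_tanh x).deriv, (hasDerivAt_tanh y).deriv]
  have := Real.cosh_pos x
  gcongr

theorem strictAntiOn_tanh_div_self : StrictAntiOn (fun x ↦ Real.tanh x / x) (Ioi 0) := by
  rw [← Ici_sdiff_left]
  exact strictAntiOn_div_self_of_strictConcaveOn strictConcaveOn_tanh self_mem_Ici Real.tanh_zero

theorem tendsto_tanh_div_self : Tendsto (fun x ↦ Real.tanh x / x) (𝓝[≠] 0) (𝓝 1) := by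
  simpa [slope_fun_def_field] using (hasDerivAt_tanh 0).tendsto_slope

theorem continuous_log_cosh_sqrt : Continuous fun t ↦ Real.log (Real.cosh (√t)) :=
  (Real.continuous_cosh.comp Real.continuous_sqrt).log fun _ ↦ (Real.cosh_pos _).ne'

theorem hasDerivAt_log_cosh_sqrt {t : ℝ} (ht : 0 < t) :
    HasDerivAt (fun t ↦ Real.log (Real.cosh (√t))) (Real.tanh (√t) / √t / 2) t := by
  convert (Real.hasDerivAt_sqrt ht.ne').cosh.log (Real.cosh_pos _).ne' using 1
  rw [Real.tanh_eq_sinh_div_cosh]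
  ring

theorem strictConcaveOn_log_cosh_sqrt :
    StrictConcaveOn ℝ (Ici 0) fun t ↦ Real.log (Real.cosh (√t)) := by
  refine StrictAntiOn.strictConcaveOn_of_deriv (convex_Ici 0)
    continuous_log_cosh_sqrt.continuousOn ?_
  rw [interior_Ici]
  intro t ht u hu htu
  rw [(hasDerivAt_log_cosh_sqrt ht).deriv, (hasDerivAt_log_cosh_sqrt hu).deriv]
  have hslope : Real.tanh (√u) / √u < Real.tanh (√t) / √t :=
    strictAntiOn_tanh_div_self (Real.sqrt_pos.2 ht) (Real.sqrt_pos.2 hu)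
      (Real.sqrt_lt_sqrt (le_of_lt ht) htu)
  gcongr

theorem strictAntiOn_log_cosh_sqrt_div_self :
    StrictAntiOn (fun t ↦ Real.log (Real.cosh (√t)) / t) (Ioi 0) := by
  rw [← Ici_sdiff_left]
  exact strictAntiOn_div_self_of_strictConcaveOn strictConcaveOn_log_cosh_sqrt self_mem_Ici
    (by simp)

theorem tendsto_log_cosh_sqrt_div_self :
    Tendsto (fun t ↦ Real.log (Real.cosh (√t)) / t) (𝓝[>] 0) (𝓝 (1 / 2)) := by
  have hsqrt : Tendsto Real.sqrt (𝓝[>] 0) (𝓝[≠] 0) :=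
    tendsto_nhdsWithin_iff.2 ⟨(Real.continuous_sqrt.tendsto' 0 0 Real.sqrt_zero).mono_left
      nhdsWithin_le_nhds, eventually_mem_nhdsWithin.mono fun _ ht ↦ (Real.sqrt_pos.2 ht).ne'⟩
  have hderiv : Tendsto (fun t ↦ Real.tanh (√t) / √t / 2 / 1) (𝓝[>] 0) (𝓝 (1 / 2)) := by
    simpa only [div_one, Function.comp_def] using (tendsto_tanh_div_self.comp hsqrt).div_const 2
  exact HasDerivAt.lhopital_zero_nhdsGT
    (eventually_mem_nhdsWithin.mono fun _ ht ↦ hasDerivAt_log_cosh_sqrt ht)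
    (.of_forall hasDerivAt_id) (.of_forall fun _ ↦ one_ne_zero)
    ((continuous_log_cosh_sqrt.tendsto' 0 0 (by simp)).mono_left nhdsWithin_le_nhds)
    (tendsto_id.mono_left nhdsWithin_le_nhds) hderiv

theorem bSym_eq (n : ℕ) :
    bSym n = Real.log (Real.cosh (√(4 * n : ℝ)⁻¹)) / (4 * n : ℝ)⁻¹ / 4 := by
  have hsqrt : √(4 * n : ℝ)⁻¹ = 1 / (2 * √n) := by
    rw [Real.sqrt_inv, Real.sqrt_mul zero_le_four, one_div,
      show (4 : ℝ) = 2 ^ 2 by norm_num, Real.sqrt_sq zero_le_two]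
  rw [bSym, hsqrt, div_inv_eq_mul]
  ring

theorem bSym_lt_bSym {m n : ℕ} (hm : 0 < m) (hmn : m < n) : bSym m < bSym n := by
  have hm4 : (0 : ℝ) < 4 * m := by positivity
  have hmn4 : (4 * m : ℝ) < 4 * n := by gcongr
  rw [bSym_eq, bSym_eq]
  exact div_lt_div_of_pos_right (strictAntiOn_log_cosh_sqrt_div_self
    (inv_pos.2 (hm4.trans hmn4)) (inv_pos.2 hm4) (inv_strictAnti₀ hm4 hmn4)) four_pos

theorem tendsto_bSym : Tendsto bSym atTop (𝓝 (1 / 8)) := by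
  have hinv : Tendsto (fun n : ℕ ↦ (4 * n : ℝ)⁻¹) atTop (𝓝[>] 0) :=
    tendsto_inv_atTop_nhdsGT_zero.comp (tendsto_natCast_atTop_atTop.const_mul_atTop four_pos)
  rw [funext bSym_eq, show (1 / 8 : ℝ) = 1 / 2 / 4 by norm_num]
  exact (tendsto_log_cosh_sqrt_div_self.comp hinv).div_const 4

theorem bSym_increasing_tendsto_one_eighth :
    (∀ m n : ℕ, 1 ≤ m → m < n → bSym m < bSym n) ∧
    Tendsto bSym atTop (nhds (1 / 8)) :=
  ⟨fun _ _ ↦ bSym_lt_bSym, tendsto_bSym⟩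
end

section
/- Let p = 1/2, so that f_{n,k} = (n choose k)·2^{−n} and z_{n,k} = (2k − n)/√n. Then lim_{n→∞} √n · f_{n,⌊n/2⌋} / (2 · φ(z_{n,⌊n/2⌋+1})) = 1. -/
open MeasureTheory Filter

/-!
Stirling's formula gives `√m * centralBinom m / 4 ^ m → 1 / √π`. Since
`2 * C(2m-1, m-1) = C(2m, m)`, the central probabilities for `n = 2m - 1` and `n = 2m` coincide, so
both parities of `n` are governed by `m = ⌈n/2⌉ ~ n/2`, and `√n * f_{n,⌊n/2⌋} → √(2/π) = 2 φ(0)`.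
As `⌊n/2⌋ + 1` stays within `1` of the mean, `z_{n,⌊n/2⌋+1} → 0`, so the denominator has the same
limit.
-/

open scoped Topology Real Nat

lemma stirlingSeq_two_mul_div_sq (m : ℕ) :
    Stirling.stirlingSeq (2 * m) / Stirling.stirlingSeq m ^ 2 = √m * m.centralBinom / 4 ^ m := by
  rcases eq_or_ne m 0 with rfl | hm
  · simp
  have hchoose : (m.centralBinom : ℝ) = (2 * m)! / (m ! * m !) := by
    rw [Nat.centralBinom, two_mul, Nat.cast_add_choose]
  have hsqrt : √(2 * (2 * m : ℕ)) = 2 * √m := by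
    rw [show (2 * (2 * m : ℕ) : ℝ) = 2 ^ 2 * m by push_cast; ring,
      Real.sqrt_mul (by positivity), Real.sqrt_sq zero_le_two]
  have hpow : ((2 * m : ℕ) / Real.exp 1) ^ (2 * m) = 4 ^ m * ((m / Real.exp 1) ^ m) ^ 2 := by
    rw [Nat.cast_mul, Nat.cast_ofNat, mul_div_assoc, mul_pow, pow_mul 2, pow_mul' _ 2]
    norm_num
  rw [Stirling.stirlingSeq, Stirling.stirlingSeq, hsqrt, hpow, hchoose, div_pow (m ! : ℝ),
    mul_pow √(2 * m), Real.sq_sqrt (by positivity)]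
  field_simp
  exact (Real.sq_sqrt m.cast_nonneg).symm

lemma tendsto_sqrt_mul_centralBinom_div_four_pow :
    Tendsto (fun m : ℕ ↦ √m * m.centralBinom / 4 ^ m) atTop (𝓝 (√π)⁻¹) := by
  have hπ : √π ≠ 0 := by positivity
  have hstirling := Stirling.tendsto_stirlingSeq_sqrt_pi
  have hlim := (hstirling.comp (tendsto_id.const_mul_atTop' two_pos)).div (hstirling.pow 2)
    (pow_ne_zero 2 hπ)
  rw [show √π / √π ^ 2 = (√π)⁻¹ by field_simp] at hlim
  exact hlim.congr stirlingSeq_two_mul_div_sq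

lemma centralBinom_succ_eq_two_mul_choose (m : ℕ) :
    (m + 1).centralBinom = 2 * (2 * m + 1).choose m := by
  rw [Nat.centralBinom, mul_add_one, Nat.choose_succ_succ, Nat.choose_symm_half, ← two_mul]

lemma choose_half_div_two_pow (n : ℕ) :
    (n.choose (n / 2) : ℝ) / 2 ^ n = ((n + 1) / 2).centralBinom / 4 ^ ((n + 1) / 2) := by
  rcases Nat.even_or_odd' n with ⟨m, rfl | rfl⟩
  · rw [show (2 * m + 1) / 2 = m by lia, show 2 * m / 2 = m by lia, pow_mul, Nat.centralBinom]
    norm_num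
  · rw [show (2 * m + 1 + 1) / 2 = m + 1 by lia, show (2 * m + 1) / 2 = m by lia,
      centralBinom_succ_eq_two_mul_choose, show (4 : ℝ) = 2 ^ 2 by norm_num, ← pow_mul,
      mul_add_one, pow_succ _ (2 * m + 1), Nat.cast_mul, Nat.cast_ofNat]
    field_simp

lemma tendsto_half_succ_atTop : Tendsto (fun n : ℕ ↦ (n + 1) / 2) atTop atTop :=
  (Nat.tendsto_div_const_atTop two_ne_zero).comp (tendsto_add_atTop_nat 1)

lemma tendsto_half_succ_div : Tendsto (fun n : ℕ ↦ (((n + 1) / 2 : ℕ) : ℝ) / n) atTop (𝓝 2⁻¹) := by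
  have hceil (n : ℕ) : ⌈(2⁻¹ : ℝ) * n⌉₊ = (n + 1) / 2 := by
    refine eq_of_forall_ge_iff fun k ↦ ?_
    rw [Nat.ceil_le, inv_mul_le_iff₀ two_pos]
    norm_cast
    lia
  have hlim := (tendsto_nat_ceil_mul_div_atTop (inv_nonneg.2 (zero_le_two (α := ℝ)))).comp
    tendsto_natCast_atTop_atTop
  simpa only [Function.comp_def, hceil] using hlim

lemma binProb_one_half {n k : ℕ} (hk : k ≤ n) : binProb (1 / 2) n k = n.choose k / 2 ^ n := by
  rw [binProb, sub_half, mul_assoc, pow_mul_pow_sub _ hk, one_div_pow, mul_one_div]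

lemma tendsto_sqrt_mul_binProb_one_half :
    Tendsto (fun n : ℕ ↦ √n * binProb (1 / 2) n (n / 2)) atTop (𝓝 √(2 / π)) := by
  have hlim := (tendsto_sqrt_mul_centralBinom_div_four_pow.comp tendsto_half_succ_atTop).div
    tendsto_half_succ_div.sqrt (by positivity)
  rw [show (√π)⁻¹ / √2⁻¹ = √(2 / π) by
    rw [Real.sqrt_inv, div_inv_eq_mul, Real.sqrt_div zero_le_two, inv_mul_eq_div]] at hlim
  refine hlim.congr' ?_
  filter_upwards [eventually_ne_atTop 0] with n hn
  have hhalf : √((n + 1) / 2 : ℕ) ≠ 0 := by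
    rw [Real.sqrt_ne_zero']
    exact_mod_cast (by lia : 0 < (n + 1) / 2)
  simp only [Pi.div_apply, Function.comp_apply]
  rw [binProb_one_half (n.div_le_self 2), choose_half_div_two_pow,
    Real.sqrt_div (Nat.cast_nonneg _)]
  field_simp

lemma tendsto_zpt_zero {p C : ℝ} (hp₀ : 0 < p) (hp₁ : p < 1) {k : ℕ → ℤ}
    (hk : ∀ᶠ n : ℕ in atTop, |(k n : ℝ) - n * p| ≤ C) :
    Tendsto (fun n ↦ zpt p n (k n)) atTop (𝓝 0) := by
  have hvar : Tendsto (fun n : ℕ ↦ (n : ℝ) * p * (1 - p)) atTop atTop :=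
    (tendsto_natCast_atTop_atTop.atTop_mul_const hp₀).atTop_mul_const (sub_pos.2 hp₁)
  have hinv := (Real.tendsto_sqrt_atTop.comp hvar).inv_tendsto_atTop
  exact bdd_le_mul_tendsto_zero' C hk hinv

lemma abs_half_add_one_sub_mul_one_half_le (n : ℕ) :
    |(((n / 2 : ℕ) + 1 : ℤ) : ℝ) - n * (1 / 2)| ≤ 1 := by
  have hlower : (n : ℝ) ≤ 2 * (n / 2 : ℕ) + 1 := by exact_mod_cast (by lia : n ≤ 2 * (n / 2) + 1)
  have hupper : 2 * ((n / 2 : ℕ) : ℝ) ≤ n := by exact_mod_cast n.mul_div_le 2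
  rw [Int.cast_add, Int.cast_natCast, Int.cast_one, abs_le]
  constructor <;> linarith

lemma continuous_normalPdf : Continuous normalPdf := by
  unfold normalPdf
  fun_prop

lemma two_mul_normalPdf_zero : 2 * normalPdf 0 = √(2 / π) := by
  have hexp : Real.exp (-0 ^ 2 / 2) = 1 := by norm_num
  rw [normalPdf, hexp, Real.sqrt_mul zero_le_two, Real.sqrt_div zero_le_two]
  field_simp
  exact (Real.sq_sqrt zero_le_two).symm

theorem central_binomial_ratio_tendsto_one :
    Tendsto (fun n : ℕ =>
        Real.sqrt n * binProb (1 / 2) n (n / 2) /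
          (2 * normalPdf (zpt (1 / 2) n ((n / 2 : ℕ) + 1))))
      atTop (nhds 1) := by
  have hzpt : Tendsto (fun n : ℕ ↦ zpt (1 / 2) n ((n / 2 : ℕ) + 1)) atTop (𝓝 0) :=
    tendsto_zpt_zero one_half_pos one_half_lt_one
      (.of_forall abs_half_add_one_sub_mul_one_half_le)
  have hdenom := ((continuous_normalPdf.tendsto 0).comp hzpt).const_mul 2
  rw [two_mul_normalPdf_zero] at hdenom
  have hne : √(2 / π) ≠ 0 := by positivity
  simpa only [div_self hne] using! tendsto_sqrt_mul_binProb_one_half.div hdenom hne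
end

section
/- Let α(w) = −w·log w − (1−w)·log(1−w) − 2w(1−w) + 1/2 − log 2 for w ∈ (0,1). Then α(1/2) = α'(1/2) = α''(1/2) = α'''(1/2) = 0, the fourth derivative satisfies α''''(w) = −2/(1−w)³ − 2/w³ < 0 for w ∈ (1/2, 1), and consequently each of the functions α''', α'', α', and α is strictly negative and strictly decreasing on (1/2, 1). -/
/-- The exponential-rate function in the symmetric binomial-vs-Gaussian comparison. -/
noncomputable def αSym (w : ℝ) : ℝ :=
  -w * Real.log w - (1 - w) * Real.log (1 - w) - 2 * w * (1 - w) + 1 / 2 - Real.log 2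

/-!
Since `1 / 2 - 2w(1 - w) = 2(w - 1/2)²`, the function `αSym` is the binary entropy minus its
quadratic Taylor polynomial at its maximum `1/2`. By the symmetry of entropy the cubic term vanishes
as well, so `αSym` and its first three derivatives vanish at `1/2`. The fourth derivative is
negative on `(1/2, 1)`, and a function vanishing at `1/2` with negative derivative beyond is
strictly decreasing and negative there; applying this four times carries the sign down to `αSym`.
-/

open Set Real

section IterateDeriv

variable {f : ℝ → ℝ} {a b : ℝ} {n k : ℕ}

theorem strictAntiOn_Ico_of_deriv_neg (hf : ContinuousOn f (Ico a b))
    (hf' : ∀ x ∈ Ioo a b, deriv f x < 0) : StrictAntiOn f (Ico a b) :=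
  strictAntiOn_of_deriv_neg (convex_Ico a b) hf (by simpa only [interior_Ico] using hf')

theorem neg_of_deriv_neg_of_left_nonpos (hf : ContinuousOn f (Ico a b))
    (hf' : ∀ x ∈ Ioo a b, deriv f x < 0) (ha : f a ≤ 0) : ∀ x ∈ Ioo a b, f x < 0 := by
  intro x hx
  have hanti := strictAntiOn_Ico_of_deriv_neg hf hf'
  have ha_mem : a ∈ Ico a b := left_mem_Ico.2 (hx.1.trans hx.2)
  exact (hanti ha_mem (Ioo_subset_Ico_self hx) hx.1).trans_le ha

theorem iterate_deriv_neg_of_le (hf : ∀ k < n, ContinuousOn (deriv^[k] f) (Ico a b))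
    (ha : ∀ k < n, deriv^[k] f a ≤ 0) (hn : ∀ x ∈ Ioo a b, deriv^[n] f x < 0) (hk : k ≤ n) :
    ∀ x ∈ Ioo a b, deriv^[k] f x < 0 := by
  induction hk using Nat.decreasingInduction with
  | self => exact hn
  | of_succ k hk ih =>
    rw [Function.iterate_succ'] at ih
    exact neg_of_deriv_neg_of_left_nonpos (hf k hk) ih (ha k hk)

theorem strictAntiOn_iterate_deriv_of_lt (hf : ∀ k < n, ContinuousOn (deriv^[k] f) (Ico a b))
    (ha : ∀ k < n, deriv^[k] f a ≤ 0) (hn : ∀ x ∈ Ioo a b, deriv^[n] f x < 0) (hk : k < n) :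
    StrictAntiOn (deriv^[k] f) (Ico a b) := by
  have hderiv : ∀ x ∈ Ioo a b, deriv^[k + 1] f x < 0 := iterate_deriv_neg_of_le hf ha hn hk
  rw [Function.iterate_succ'] at hderiv
  exact strictAntiOn_Ico_of_deriv_neg (hf k hk) hderiv

end IterateDeriv

theorem eqOn_deriv_of_hasDerivAt {𝕜 F : Type*} [NontriviallyNormedField 𝕜] [NormedAddCommGroup F]
    [NormedSpace 𝕜 F] {f g g' : 𝕜 → F} {s : Set 𝕜} (hs : IsOpen s) (hfg : EqOn f g s)
    (hg : ∀ x ∈ s, HasDerivAt g (g' x) x) : EqOn (deriv f) g' s :=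
  (hfg.deriv hs).trans fun x hx => (hg x hx).deriv

theorem αSym_eq_binEntropy_sub (w : ℝ) :
    αSym w = binEntropy w - (log 2 - 2 * (w - 1 / 2) ^ 2) := by
  rw [αSym, binEntropy, log_inv, log_inv]
  ring

theorem isOpen_compl_zero_one : IsOpen ({0, 1}ᶜ : Set ℝ) :=
  (toFinite {0, 1}).isClosed.isOpen_compl

theorem mem_compl_zero_one {w : ℝ} : w ∈ ({0, 1}ᶜ : Set ℝ) ↔ w ≠ 0 ∧ 1 - w ≠ 0 := by
  simp only [mem_compl_iff, mem_insert_iff, mem_singleton_iff, not_or, ne_eq, sub_eq_zero,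
    eq_comm (a := (1 : ℝ))]

theorem mem_compl_zero_one_of_mem_Ioo {w : ℝ} (hw : w ∈ Ioo (0 : ℝ) 1) :
    w ∈ ({0, 1}ᶜ : Set ℝ) :=
  mem_compl_zero_one.2 ⟨hw.1.ne', (sub_pos.2 hw.2).ne'⟩

theorem analyticOnNhd_αSym : AnalyticOnNhd ℝ αSym {0, 1}ᶜ := by
  intro w hw
  obtain ⟨hw₀, hw₁⟩ := mem_compl_zero_one.1 hw
  apply ContDiffAt.analyticAt
  unfold αSym
  fun_prop (disch := assumption)

theorem eqOn_deriv_αSym :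
    EqOn (deriv αSym) (fun w => log (1 - w) - log w + 4 * (w - 1 / 2)) {0, 1}ᶜ := by
  refine eqOn_deriv_of_hasDerivAt isOpen_compl_zero_one (fun w _ => αSym_eq_binEntropy_sub w) ?_
  intro w hw
  obtain ⟨hw₀, hw₁⟩ := mem_compl_zero_one.1 hw
  have hquad := (((hasDerivAt_id w).sub_const (1 / 2)).pow 2).const_mul 2
  refine ((hasDerivAt_binEntropy hw₀ (sub_ne_zero.1 hw₁).symm).sub
    (hquad.const_sub (log 2))).congr_deriv ?_
  simp only [id]
  ring

theorem eqOn_deriv2_αSym :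
    EqOn (deriv^[2] αSym) (fun w => 4 - w⁻¹ - (1 - w)⁻¹) {0, 1}ᶜ := by
  refine eqOn_deriv_of_hasDerivAt isOpen_compl_zero_one eqOn_deriv_αSym fun w hw => ?_
  obtain ⟨hw₀, hw₁⟩ := mem_compl_zero_one.1 hw
  have hlin := ((hasDerivAt_id w).sub_const (1 / 2)).const_mul 4
  have hlog := (((hasDerivAt_id w).const_sub 1).log hw₁).sub (hasDerivAt_log hw₀)
  refine (hlog.add hlin).congr_deriv ?_
  simp only [id]
  ring

theorem eqOn_deriv3_αSym :
    EqOn (deriv^[3] αSym) (fun w => (w ^ 2)⁻¹ - ((1 - w) ^ 2)⁻¹) {0, 1}ᶜ := by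
  rw [Function.iterate_succ']
  refine eqOn_deriv_of_hasDerivAt isOpen_compl_zero_one eqOn_deriv2_αSym fun w hw => ?_
  obtain ⟨hw₀, hw₁⟩ := mem_compl_zero_one.1 hw
  have hinv := (hasDerivAt_inv hw₀).const_sub 4
  refine (hinv.sub (((hasDerivAt_id w).const_sub 1).inv hw₁)).congr_deriv ?_
  simp only [id]
  ring

theorem eqOn_deriv4_αSym :
    EqOn (deriv^[4] αSym) (fun w => -2 / (1 - w) ^ 3 - 2 / w ^ 3) {0, 1}ᶜ := by
  rw [Function.iterate_succ']
  refine eqOn_deriv_of_hasDerivAt isOpen_compl_zero_one eqOn_deriv3_αSym fun w hw => ?_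
  obtain ⟨hw₀, hw₁⟩ := mem_compl_zero_one.1 hw
  have hinv := ((hasDerivAt_id w).pow 2).inv (pow_ne_zero 2 hw₀)
  have hinv' := (((hasDerivAt_id w).const_sub 1).pow 2).inv (pow_ne_zero 2 hw₁)
  refine (hinv.sub hinv').congr_deriv ?_
  simp only [id, Pi.pow_apply]
  field_simp
  ring

theorem deriv4_αSym_neg {w : ℝ} (hw : w ∈ Ioo (0 : ℝ) 1) : deriv^[4] αSym w < 0 := by
  have hw₀ : 0 < w := hw.1
  have hw₁ : 0 < 1 - w := sub_pos.2 hw.2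
  calc deriv^[4] αSym w
    _ = -2 / (1 - w) ^ 3 - 2 / w ^ 3 := eqOn_deriv4_αSym (mem_compl_zero_one_of_mem_Ioo hw)
    _ = -(2 / (1 - w) ^ 3 + 2 / w ^ 3) := by ring
    _ < 0 := neg_lt_zero.2 (by positivity)

theorem iterate_deriv_αSym_half {k : ℕ} (hk : k < 4) : deriv^[k] αSym (1 / 2) = 0 := by
  have half_mem : (1 / 2 : ℝ) ∈ ({0, 1}ᶜ : Set ℝ) := by norm_num
  interval_cases k
  · simp [αSym_eq_binEntropy_sub]
  · exact (eqOn_deriv_αSym half_mem).trans (by simp only [sub_half, sub_self, mul_zero, add_zero])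
  · exact (eqOn_deriv2_αSym half_mem).trans (by norm_num)
  · exact (eqOn_deriv3_αSym half_mem).trans (by norm_num)

theorem Ico_half_one_subset_compl_zero_one : Ico (1 / 2 : ℝ) 1 ⊆ {0, 1}ᶜ := fun _ hw =>
  mem_compl_zero_one_of_mem_Ioo ⟨one_half_pos.trans_le hw.1, hw.2⟩

theorem continuousOn_iterate_deriv_αSym (k : ℕ) :
    ContinuousOn (deriv^[k] αSym) (Ico (1 / 2) 1) :=
  (analyticOnNhd_αSym.iterated_deriv k).continuousOn.mono Ico_half_one_subset_compl_zero_one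

theorem iterate_deriv_αSym_neg {k : ℕ} (hk : k ≤ 4) :
    ∀ w ∈ Ioo (1 / 2 : ℝ) 1, deriv^[k] αSym w < 0 :=
  iterate_deriv_neg_of_le (fun j _ => continuousOn_iterate_deriv_αSym j)
    (fun _ hj => (iterate_deriv_αSym_half hj).le)
    (fun _ hw => deriv4_αSym_neg (Ioo_subset_Ioo_left one_half_pos.le hw)) hk

theorem strictAntiOn_iterate_deriv_αSym {k : ℕ} (hk : k < 4) :
    StrictAntiOn (deriv^[k] αSym) (Ico (1 / 2) 1) :=
  strictAntiOn_iterate_deriv_of_lt (fun j _ => continuousOn_iterate_deriv_αSym j)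
    (fun _ hj => (iterate_deriv_αSym_half hj).le)
    (fun _ hw => deriv4_αSym_neg (Ioo_subset_Ioo_left one_half_pos.le hw)) hk

theorem rate_function_derivatives_symmetric :
    αSym (1 / 2) = 0 ∧ deriv αSym (1 / 2) = 0 ∧
    deriv^[2] αSym (1 / 2) = 0 ∧ deriv^[3] αSym (1 / 2) = 0 ∧
    (∀ w ∈ Set.Ioo (1 / 2 : ℝ) 1,
      deriv^[4] αSym w = -2 / (1 - w) ^ 3 - 2 / w ^ 3 ∧ deriv^[4] αSym w < 0) ∧
    (∀ w ∈ Set.Ioo (1 / 2 : ℝ) 1, deriv^[3] αSym w < 0) ∧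
    StrictAntiOn (deriv^[3] αSym) (Set.Ioo (1 / 2 : ℝ) 1) ∧
    (∀ w ∈ Set.Ioo (1 / 2 : ℝ) 1, deriv^[2] αSym w < 0) ∧
    StrictAntiOn (deriv^[2] αSym) (Set.Ioo (1 / 2 : ℝ) 1) ∧
    (∀ w ∈ Set.Ioo (1 / 2 : ℝ) 1, deriv αSym w < 0) ∧
    StrictAntiOn (deriv αSym) (Set.Ioo (1 / 2 : ℝ) 1) ∧
    (∀ w ∈ Set.Ioo (1 / 2 : ℝ) 1, αSym w < 0) ∧
    StrictAntiOn αSym (Set.Ioo (1 / 2 : ℝ) 1) := by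
  have hzero {k : ℕ} (hk : k < 4) := iterate_deriv_αSym_half hk
  have hneg {k : ℕ} (hk : k ≤ 4) := iterate_deriv_αSym_neg hk
  have hanti {k : ℕ} (hk : k < 4) :=
    (strictAntiOn_iterate_deriv_αSym hk).mono Ioo_subset_Ico_self
  have hfourth : ∀ w ∈ Ioo (1 / 2 : ℝ) 1, deriv^[4] αSym w = -2 / (1 - w) ^ 3 - 2 / w ^ 3 :=
    fun w hw => eqOn_deriv4_αSym (Ico_half_one_subset_compl_zero_one (Ioo_subset_Ico_self hw))
  exact ⟨hzero (k := 0) (by lia), hzero (k := 1) (by lia), hzero (k := 2) (by lia),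
    hzero (k := 3) (by lia), fun w hw => ⟨hfourth w hw, hneg le_rfl w hw⟩,
    hneg (k := 3) (by lia), hanti (k := 3) (by lia),
    hneg (k := 2) (by lia), hanti (k := 2) (by lia),
    hneg (k := 1) (by lia), hanti (k := 1) (by lia),
    hneg (k := 0) (by lia), hanti (k := 0) (by lia)⟩
end

section
/- Let p ∈ (1/2, 1) and for n ≥ 1 define a_n = (√n/(z_{1,1} − z_{1,0})) · log( (p/(1−p)) · (exp(z_{1,1}/√n) − 1)/(1 − exp(z_{1,0}/√n)) ) and b_n = n · log( (1−p)·exp(−z_{1,0} a_n/√n) + p·exp(−z_{1,1} a_n/√n) ), where z_{1,0} = −√(p/(1−p)) and z_{1,1} = √((1−p)/p). Then b_n = 1/8 − ((1 − p + p²)/(576·p(1−p)))·n^{−1} + O(n^{−2}) as n → ∞; that is, there exist C > 0 and n₀ such that |b_n − 1/8 + ((1 − p + p²)/(576·p(1−p)))·n^{−1}| ≤ C/n² for all n ≥ n₀. -/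
open MeasureTheory Filter

/-!
Put `q = 1 - p` and let `u = (z₁₁ - z₁₀)/√n`, so that the one-step log-returns are `q u` (up) and
`-p u` (down), and `u² = 1/(p q n)`. Writing `log (eˣ - 1) = log x + x/2 + G x` with the even
function `G x = log (sinh (x/2) / (x/2))`, the logarithms in `bₙ` collapse to
`bₙ = n (G u - q G (q u) - p G (p u))`. Now insert `G x = x²/24 - x⁴/2880 + O(x⁶)` and use
`1 - p³ - q³ = 3 p q` and `1 - p⁵ - q⁵ = 5 p q (1 - p q)`.
-/

section

open Real Asymptotics Finset
open scoped Topology Nat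

lemma sum_range_pow_div_factorial_sub_neg {K : Type*} [Field K] (x : K) (n : ℕ) :
    (∑ i ∈ range (2 * n + 1), x ^ i / (i ! : K)) - ∑ i ∈ range (2 * n + 1), (-x) ^ i / (i ! : K) =
      2 * ∑ k ∈ range n, x ^ (2 * k + 1) / ((2 * k + 1)! : K) := by
  rw [← sum_sub_distrib]
  induction n with
  | zero => simp
  | succ n ih =>
    have even_exponent : Even (2 * n + 2) := even_two_mul (n + 1)
    rw [mul_add_one, sum_range_succ, sum_range_succ, ih, sum_range_succ _ n,
      (odd_two_mul_add_one n).neg_pow, even_exponent.neg_pow]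
    ring

lemma sinh_sub_sum_range_isBigO (n : ℕ) :
    (fun x : ℝ ↦ sinh x - ∑ k ∈ range n, x ^ (2 * k + 1) / (2 * k + 1)!) =O[𝓝 0]
      fun x ↦ x ^ (2 * n + 1) := by
  have exp_expansion := Real.exp_sub_sum_range_isBigO_pow (2 * n + 1)
  have exp_neg_expansion : (fun x : ℝ ↦ exp (-x) - ∑ i ∈ range (2 * n + 1), (-x) ^ i / i !) =O[𝓝 0]
      fun x ↦ x ^ (2 * n + 1) :=
    isBigO_neg_right.1 <|
      (exp_expansion.comp_tendsto (continuous_neg.tendsto' 0 0 neg_zero)).congr_right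
        (odd_two_mul_add_one n).neg_pow
  refine ((exp_expansion.sub exp_neg_expansion).const_mul_left (1 / 2)).congr_left fun x ↦ ?_
  rw [sinh_eq]
  linear_combination -(1 / 2 : ℝ) * sum_range_pow_div_factorial_sub_neg x n

lemma log_one_sub_add_sum_range_isBigO (n : ℕ) :
    (fun x : ℝ ↦ (∑ i ∈ range n, x ^ (i + 1) / (i + 1)) + log (1 - x)) =O[𝓝 0]
      fun x ↦ x ^ (n + 1) := by
  refine .of_bound 2 ?_
  filter_upwards [Metric.ball_mem_nhds (0 : ℝ) (half_pos one_pos)] with x hx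
  have hx : |x| < 1 / 2 := by simpa using hx
  calc |(∑ i ∈ range n, x ^ (i + 1) / (i + 1)) + log (1 - x)|
      ≤ |x| ^ (n + 1) / (1 - |x|) := abs_log_sub_add_sum_range_le (by linarith) n
    _ ≤ |x| ^ (n + 1) / (1 / 2) := by gcongr; linarith
    _ = 2 * ‖x ^ (n + 1)‖ := by rw [norm_pow, norm_eq_abs]; ring

lemma log_one_add_isBigO_of_isBigO {l : Filter ℝ} (hl : l ≤ 𝓝 0) {w : ℝ → ℝ} {a b : ℝ}
    (hw : (fun x ↦ w x - (a * x ^ 2 + b * x ^ 4)) =O[l] fun x ↦ x ^ 6) :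
    (fun x ↦ log (1 + w x) - (a * x ^ 2 + (b - a ^ 2 / 2) * x ^ 4)) =O[l] fun x ↦ x ^ 6 := by
  have pow_isBigO {m k : ℕ} (h : m < k) : (fun x : ℝ ↦ x ^ k) =O[l] fun x ↦ x ^ m :=
    (isLittleO_pow_pow h).isBigO.mono hl
  have w_fourth_order : (fun x ↦ w x - a * x ^ 2) =O[l] fun x ↦ x ^ 4 :=
    ((hw.trans (pow_isBigO (by norm_num))).add
      ((isBigO_refl _ l).const_mul_left b)).congr_left fun x ↦ by ring
  have w_second_order (c : ℝ) : (fun x ↦ w x + c * x ^ 2) =O[l] fun x ↦ x ^ 2 :=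
    ((w_fourth_order.trans (pow_isBigO (by norm_num))).add
      ((isBigO_refl _ l).const_mul_left (a + c))).congr_left fun x ↦ by ring
  have w_isBigO : w =O[l] fun x ↦ x ^ 2 := by simpa using w_second_order 0
  have w_sq : (fun x ↦ w x ^ 2 - a ^ 2 * x ^ 4) =O[l] fun x ↦ x ^ 6 :=
    (w_fourth_order.mul (w_second_order a)).congr (fun x ↦ by ring) fun x ↦ by ring
  have neg_w_tendsto : Tendsto (fun x ↦ -w x) l (𝓝 0) := by
    have sq_tendsto := ((continuous_pow (M := ℝ) 2).tendsto' 0 0 (by simp)).mono_left hl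
    simpa using (w_isBigO.trans_tendsto sq_tendsto).neg
  have log_remainder : (fun x ↦ -w x + w x ^ 2 / 2 + log (1 + w x)) =O[l] fun x ↦ x ^ 6 := by
    refine (((log_one_sub_add_sum_range_isBigO 2).comp_tendsto neg_w_tendsto).trans
      (w_isBigO.neg_left.pow 3)).congr (fun x ↦ ?_) fun x ↦ by ring
    norm_num [sum_range_succ]
  exact ((log_remainder.add hw).sub (w_sq.const_mul_left (1 / 2))).congr_left fun x ↦ by ring

/-- The even function `log (sinh x / x)`. At `x = 0` the conventions `0 / 0 = 0` and `log 0 = 0`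
give the value `0` of its continuous extension. -/
noncomputable def logSinhc (x : ℝ) : ℝ := log (sinh x / x)

lemma logSinhc_neg (x : ℝ) : logSinhc (-x) = logSinhc x := by
  rw [logSinhc, logSinhc, sinh_neg, neg_div_neg_eq]

lemma sinh_div_self_sub_one_isBigO :
    (fun x : ℝ ↦ sinh x / x - 1 - (1 / 6 * x ^ 2 + 1 / 120 * x ^ 4)) =O[𝓝[≠] 0]
      fun x ↦ x ^ 6 := by
  have sinh_expansion := (sinh_sub_sum_range_isBigO 3).mono (nhdsWithin_le_nhds (s := {0}ᶜ))
  refine ((isBigO_refl (fun x : ℝ ↦ x⁻¹) _).mul sinh_expansion).congr' ?_ ?_ <;>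
    filter_upwards [self_mem_nhdsWithin] with x (hx : x ≠ 0)
  · simp only [sum_range_succ, sum_range_zero, Nat.factorial]
    push_cast
    field_simp
    ring
  · field_simp

lemma logSinhc_isBigO :
    (fun x : ℝ ↦ logSinhc x - (x ^ 2 / 6 - x ^ 4 / 180)) =O[𝓝 0] fun x ↦ x ^ 6 := by
  have punctured : (fun x : ℝ ↦ logSinhc x - (x ^ 2 / 6 - x ^ 4 / 180)) =O[𝓝[≠] 0]
      fun x ↦ x ^ 6 := by
    refine (log_one_add_isBigO_of_isBigO nhdsWithin_le_nhds
      sinh_div_self_sub_one_isBigO).congr_left fun x ↦ ?_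
    rw [logSinhc, add_sub_cancel]
    ring
  rw [← nhdsNE_sup_pure]
  exact punctured.sup (isBigO_pure.2 fun _ ↦ by simp [logSinhc])

lemma logSinhc_mul_half_isBigO (c : ℝ) :
    (fun x : ℝ ↦ logSinhc (c * x / 2) - ((c * x) ^ 2 / 24 - (c * x) ^ 4 / 2880)) =O[𝓝 0]
      fun x ↦ x ^ 6 := by
  have scaling : Tendsto (fun x : ℝ ↦ c * x / 2) (𝓝 0) (𝓝 0) :=
    Continuous.tendsto' (by fun_prop) 0 0 (by simp)
  have scaled_pow : (fun x : ℝ ↦ (c * x / 2) ^ 6) =O[𝓝 0] fun x ↦ x ^ 6 :=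
    ((isBigO_refl _ _).const_mul_left ((c / 2) ^ 6)).congr_left fun x ↦ by ring
  refine ((logSinhc_isBigO.comp_tendsto scaling).trans scaled_pow).congr_left fun x ↦ ?_
  simp only [Function.comp_apply]
  ring

lemma log_exp_sub_one {x : ℝ} (hx : x ≠ 0) :
    log (exp x - 1) = log x + x / 2 + logSinhc (x / 2) := by
  have sinh_ne : sinh (x / 2) / (x / 2) ≠ 0 :=
    div_ne_zero (sinh_ne_zero.2 (by simpa using hx)) (by simpa using hx)
  have exp_half_sq : exp x = exp (x / 2) ^ 2 := by rw [sq, ← exp_add, add_halves]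
  have factored : exp x - 1 = x * exp (x / 2) * (sinh (x / 2) / (x / 2)) := by
    rw [sinh_eq, exp_neg, exp_half_sq]
    field_simp
  rw [factored, log_mul (mul_ne_zero hx (exp_ne_zero _)) sinh_ne, log_mul hx (exp_ne_zero _),
    log_exp, logSinhc]

lemma log_one_sub_exp_neg {x : ℝ} (hx : x ≠ 0) :
    log (1 - exp (-x)) = log x - x / 2 + logSinhc (x / 2) := by
  rw [← log_neg_eq_log, neg_sub, log_exp_sub_one (neg_ne_zero.2 hx), log_neg_eq_log, neg_div,
    logSinhc_neg]
  ring

/-- The ratio of the one-step martingale density on a down-move to that on an up-move, when the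
up-probability is `p` and the log-returns of the two moves are `(1 - p) * u` and `-(p * u)`. -/
noncomputable def downUpRatio (p u : ℝ) : ℝ :=
  p / (1 - p) * (exp ((1 - p) * u) - 1) / (1 - exp (-(p * u)))

/-- The one-step summand `bₙ / n`, as a function of the spread `u` of the log-returns. -/
noncomputable def stepLogNormalizer (p u : ℝ) : ℝ :=
  log ((1 - p) * exp (p * log (downUpRatio p u)) + p * exp (-(1 - p) * log (downUpRatio p u)))

/-- The spread `(z₁₁ - z₁₀) / √n` between the two one-step log-returns. -/
noncomputable def logReturnSpread (p : ℝ) (n : ℕ) : ℝ := (z11 p - z10 p) / √n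

variable {p u : ℝ}

lemma downUpRatio_pos (hp : p ∈ Set.Ioo 0 1) (hu : 0 < u) : 0 < downUpRatio p u := by
  have hq : 0 < 1 - p := sub_pos.2 hp.2
  have up : 0 < exp ((1 - p) * u) - 1 := sub_pos.2 (one_lt_exp_iff.2 (mul_pos hq hu))
  have down : 0 < 1 - exp (-(p * u)) :=
    sub_pos.2 (exp_lt_one_iff.2 (neg_neg_of_pos (mul_pos hp.1 hu)))
  exact div_pos (mul_pos (div_pos hp.1 hq) up) down

lemma log_downUpRatio (hp : p ∈ Set.Ioo 0 1) (hu : 0 < u) :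
    log (downUpRatio p u) = u / 2 + logSinhc ((1 - p) * u / 2) - logSinhc (p * u / 2) := by
  have hp0 : p ≠ 0 := hp.1.ne'
  have hq : 1 - p ≠ 0 := (sub_pos.2 hp.2).ne'
  have ratio_ne := (downUpRatio_pos hp hu).ne'
  have ⟨num_ne, den_ne⟩ := div_ne_zero_iff.1 ratio_ne
  rw [downUpRatio, log_div num_ne den_ne, log_mul (left_ne_zero_of_mul num_ne)
    (right_ne_zero_of_mul num_ne), log_exp_sub_one (mul_ne_zero hq hu.ne'),
    log_one_sub_exp_neg (mul_ne_zero hp0 hu.ne'), log_div hp0 hq, log_mul hq hu.ne',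
    log_mul hp0 hu.ne']
  ring

lemma mul_downUpRatio_add (hp : p ∈ Set.Ioo 0 1) (hu : 0 < u) :
    (1 - p) * downUpRatio p u + p = p * (exp u - 1) / (exp (p * u) - 1) := by
  have hq : 1 - p ≠ 0 := (sub_pos.2 hp.2).ne'
  have exp_ne : exp (p * u) - 1 ≠ 0 := (sub_pos.2 (one_lt_exp_iff.2 (mul_pos hp.1 hu))).ne'
  have exp_split : exp ((1 - p) * u) = exp u / exp (p * u) := by rw [← exp_sub]; ring_nf
  have den : 1 - exp (-(p * u)) = (exp (p * u) - 1) / exp (p * u) := by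
    rw [exp_neg]; field_simp
  rw [downUpRatio, exp_split, den]
  field_simp
  ring

lemma stepLogNormalizer_eq (hp : p ∈ Set.Ioo 0 1) (hu : 0 < u) :
    stepLogNormalizer p u =
      logSinhc (u / 2) - (1 - p) * logSinhc ((1 - p) * u / 2) - p * logSinhc (p * u / 2) := by
  have hpu : p * u ≠ 0 := (mul_pos hp.1 hu).ne'
  have hq : 0 < 1 - p := sub_pos.2 hp.2
  have exp_u : exp u - 1 ≠ 0 := (sub_pos.2 (one_lt_exp_iff.2 hu)).ne'
  have exp_pu : exp (p * u) - 1 ≠ 0 := (sub_pos.2 (one_lt_exp_iff.2 (mul_pos hp.1 hu))).ne'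
  have sum_ne : (1 - p) * downUpRatio p u + p ≠ 0 :=
    (add_pos (mul_pos hq (downUpRatio_pos hp hu)) hp.1).ne'
  set L := log (downUpRatio p u) with hL
  have factored : (1 - p) * exp (p * L) + p * exp (-(1 - p) * L) =
      exp (-(1 - p) * L) * ((1 - p) * downUpRatio p u + p) := by
    rw [show p * L = -(1 - p) * L + L by ring, exp_add, hL, exp_log (downUpRatio_pos hp hu)]
    ring
  rw [stepLogNormalizer, ← hL, factored, log_mul (exp_ne_zero _) sum_ne, log_exp,
    mul_downUpRatio_add hp hu, log_div (mul_ne_zero hp.1.ne' exp_u) exp_pu,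
    log_mul hp.1.ne' exp_u, log_exp_sub_one hu.ne', log_exp_sub_one hpu,
    log_mul hp.1.ne' hu.ne', hL, log_downUpRatio hp hu]
  ring

lemma stepLogNormalizer_isBigO (hp : p ∈ Set.Ioo 0 1) :
    (fun u ↦ stepLogNormalizer p u -
      (p * (1 - p) * u ^ 2 / 8 - p * (1 - p) * (1 - p + p ^ 2) * u ^ 4 / 576)) =O[𝓝[>] 0]
        fun u ↦ u ^ 6 := by
  have expansion := ((logSinhc_mul_half_isBigO 1).sub
    ((logSinhc_mul_half_isBigO (1 - p)).const_mul_left (1 - p))).sub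
    ((logSinhc_mul_half_isBigO p).const_mul_left p)
  refine (expansion.mono nhdsWithin_le_nhds).congr' ?_ .rfl
  filter_upwards [self_mem_nhdsWithin] with u hu
  rw [stepLogNormalizer_eq hp hu, one_mul]
  ring

lemma z10_mul_z11 (hp : p ∈ Set.Ioo 0 1) : z10 p * z11 p = -1 := by
  have hq : 0 < 1 - p := sub_pos.2 hp.2
  have hp0 := hp.1
  rw [z10, z11, neg_mul, ← sqrt_mul (by positivity), div_mul_div_cancel₀ hq.ne',
    div_self hp0.ne', sqrt_one]

lemma mean_z_eq_zero (hp : p ∈ Set.Ioo 0 1) : (1 - p) * z10 p + p * z11 p = 0 := by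
  have hq : 0 < 1 - p := sub_pos.2 hp.2
  have z11_sq : z11 p ^ 2 = (1 - p) / p := sq_sqrt (div_pos hq hp.1).le
  have z11_ne : z11 p ≠ 0 := (sqrt_pos.2 (div_pos hq hp.1)).ne'
  refine (mul_eq_zero.1 ?_).resolve_right z11_ne
  rw [add_mul, mul_assoc, z10_mul_z11 hp, mul_assoc, ← sq, z11_sq, mul_div_cancel₀ _ hp.1.ne']
  ring

lemma z11_sub_z10_sq (hp : p ∈ Set.Ioo 0 1) : (z11 p - z10 p) ^ 2 = 1 / (p * (1 - p)) := by
  have hq : 0 < 1 - p := sub_pos.2 hp.2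
  have hpq : p * (1 - p) ≠ 0 := (mul_pos hp.1 hq).ne'
  rw [eq_div_iff hpq]
  linear_combination ((1 - p) * z10 p + p * z11 p + (1 - 2 * p) * (z11 p - z10 p)) *
    mean_z_eq_zero hp - z10_mul_z11 hp

lemma z11_sub_z10_pos (hp : p ∈ Set.Ioo 0 1) : 0 < z11 p - z10 p := by
  have hq : 0 < 1 - p := sub_pos.2 hp.2
  have hp0 := hp.1
  rw [z11, z10, sub_neg_eq_add]
  positivity

lemma bCoef_eq_s15 (hp : p ∈ Set.Ioo 0 1) {n : ℕ} (hn : n ≠ 0) :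
    bCoef p n = n * stepLogNormalizer p (logReturnSpread p n) := by
  have sqrt_ne : √(n : ℝ) ≠ 0 := by positivity
  have spread_ne : z11 p - z10 p ≠ 0 := (z11_sub_z10_pos hp).ne'
  have up_return : z11 p = (1 - p) * (z11 p - z10 p) := by linear_combination mean_z_eq_zero hp
  have down_return : z10 p = -(p * (z11 p - z10 p)) := by linear_combination mean_z_eq_zero hp
  have aCoef_eq : aCoef p n =
      √n / (z11 p - z10 p) * log (downUpRatio p (logReturnSpread p n)) := by
    rw [aCoef, downUpRatio, logReturnSpread, mul_div_assoc', ← up_return, mul_div_assoc',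
      ← neg_div, ← down_return]
  have down_exponent : -z10 p * aCoef p n / √n =
      p * log (downUpRatio p (logReturnSpread p n)) := by
    rw [aCoef_eq]; field_simp; linear_combination -log _ * down_return
  have up_exponent : -z11 p * aCoef p n / √n =
      -(1 - p) * log (downUpRatio p (logReturnSpread p n)) := by
    rw [aCoef_eq]; field_simp; linear_combination -log _ * up_return
  rw [bCoef, stepLogNormalizer, down_exponent, up_exponent]

lemma logReturnSpread_sq (hp : p ∈ Set.Ioo 0 1) (n : ℕ) :
    logReturnSpread p n ^ 2 = 1 / (p * (1 - p) * n) := by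
  rw [logReturnSpread, div_pow, z11_sub_z10_sq hp, sq_sqrt n.cast_nonneg, div_div]

lemma tendsto_logReturnSpread (hp : p ∈ Set.Ioo 0 1) :
    Tendsto (logReturnSpread p) atTop (𝓝[>] 0) := by
  refine tendsto_nhdsWithin_iff.2 ⟨?_, ?_⟩
  · exact tendsto_const_nhds.div_atTop (tendsto_sqrt_atTop.comp tendsto_natCast_atTop_atTop)
  · filter_upwards [eventually_gt_atTop 0] with n hn
    exact div_pos (z11_sub_z10_pos hp) (by positivity)

end

theorem bCoef_asymptotic_expansion_general (p : ℝ) (hp : p ∈ Set.Ioo (0 : ℝ) 1) :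
    ∃ C > (0 : ℝ), ∃ n₀ : ℕ, ∀ n : ℕ, n₀ ≤ n →
      |bCoef p n - 1 / 8 + (1 - p + p ^ 2) / (576 * p * (1 - p)) / n| ≤ C / n ^ 2 := by
  have hp0 : 0 < p := hp.1
  have hq : 0 < 1 - p := sub_pos.2 hp.2
  obtain ⟨C, hC, hbound⟩ :=
    ((stepLogNormalizer_isBigO hp).comp_tendsto (tendsto_logReturnSpread hp)).exists_pos
  obtain ⟨n₀, hn₀⟩ := eventually_atTop.1 (hbound.bound.and (eventually_ne_atTop 0))
  refine ⟨C / (p * (1 - p)) ^ 3, by positivity, n₀, fun n hn ↦ ?_⟩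
  obtain ⟨step_bound, n_ne⟩ := hn₀ n hn
  have n_pos : (0 : ℝ) < n := by positivity
  simp only [Function.comp_apply, Real.norm_eq_abs] at step_bound
  rw [bCoef_eq_s15 hp n_ne]
  have spread_sq := logReturnSpread_sq hp n
  set u := logReturnSpread p n
  have spread_pow_four : u ^ 4 = (1 / (p * (1 - p) * n)) ^ 2 := by rw [← spread_sq]; ring
  have spread_pow_six : u ^ 6 = (1 / (p * (1 - p) * n)) ^ 3 := by rw [← spread_sq]; ring
  calc |n * stepLogNormalizer p u - 1 / 8 + (1 - p + p ^ 2) / (576 * p * (1 - p)) / n|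
      = |n * (stepLogNormalizer p u -
          (p * (1 - p) * u ^ 2 / 8 - p * (1 - p) * (1 - p + p ^ 2) * u ^ 4 / 576))| := by
        rw [spread_sq, spread_pow_four]
        congr 1
        field_simp
        ring
    _ ≤ n * (C * |u ^ 6|) := by
        rw [abs_mul, abs_of_pos n_pos]
        gcongr
    _ = C / (p * (1 - p)) ^ 3 / n ^ 2 := by
        rw [spread_pow_six, abs_of_pos (by positivity)]
        field_simp

theorem bCoef_asymptotic_expansion (p : ℝ) (hp : p ∈ Set.Ioo (1 / 2 : ℝ) 1) :
    ∃ C > (0 : ℝ), ∃ n₀ : ℕ, ∀ n : ℕ, n₀ ≤ n →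
      |bCoef p n - 1 / 8 + (1 - p + p ^ 2) / (576 * p * (1 - p)) / n| ≤ C / n ^ 2 :=
  bCoef_asymptotic_expansion_general p ⟨by linarith [hp.1], hp.2⟩
end
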